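/- arXiv:2407.02365 — 2 statements merged into one kernel-verified Lean document; each statement's English description precedes it below -/
import Mathlib

section
/- Let k ∈ (0,1) and define, for real u with 0 < u < K, J(u) = ∫₀^∞ sin(u√x)/(√x (cos(K√x) + cosh(K'√x))) dx + ∫₀^∞ sinh(u√x)/(√x (cosh(K√x) + cos(K'√x))) dx (this realizes ∫_ℝ sin(u√x)/√x · dx/(cos(K√x) + cosh(K'√x)) with √x = i√(−x) for x < 0). Then for every real u with 0 < u < K, J(u) · J(K − u) = 4. -/
/-!
Write `A = K`, `B = K'` and `φ_{A,B}(t) = 1 / (cosh (A t) + cos (B t))`.  The substitution `x = t²`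
turns `J` into the restriction to the real axis of the holomorphic function
`gen A B u = ∫₀^∞ 2 sinh (u t) φ_{A,B}(t) dt + ∫₀^∞ 2 sin (u t) φ_{B,A}(t) dt` on the rectangle
`|Re u| < A`, `|Im u| < B`.  It is shown, for arbitrary `A, B > 0`, that `gen` is a Jacobi elliptic
function up to scaling; the relation between `A` and `B` is only used to fix the scale.

* Since `cosh (A t) + cos (B t) = 2 cosh ((A + i B) t / 2) cosh ((A - i B) t / 2)`, the sum of two
  values of either integral at points differing by `A ± i B` is an integral with a single hyperbolic
  cosine in the denominator.  Expanding the latter in partial fractions (`hasSum_sech`) shows that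
  the contributions of the two integrals cancel: `gen` is antiperiodic under `A ± i B`
  (`gen_add`, `gen_add_conj`).
* The integrand decays like `2 e^{-A t}`, so `gen (A - u) = 2 / u + reg u` with `reg` holomorphic on
  the rectangle.  The product `gen u * (2 / u + reg u)` is holomorphic and has periods `A` and `i B`,
  hence is constant by the maximum principle (`const_of_periodic`, `gen_mul_reg`), and its value is
  `2 c` with `c = gen' 0 > 0`.  On the real axis this reads `J(u) J(A - u) = 2 c`.
* In the same way `(gen'² - gen⁴ / 4 - c²) / gen²` is constant, so that
  `gen'² = gen⁴ / 4 + D gen² + c²` (`gen_ode`).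
* Solving this equation on `[0, A / 2]` by an elliptic integral gives `K(k₀) = √(c / 2) A` for
  `k₀² = (c - D) / (2 c)` (`ellipticK_of_ode`).  Exchanging `A` and `B` changes `D` into `-D` and
  gives `K(k₀') = √(c / 2) B`.  As `A = K(k)`, `B = K(k')` and `K` is strictly increasing, `k₀ = k`
  and `c = 2` (`slope0_ellipticK`), so that the product `2 c` equals `4`.
-/

open MeasureTheory Real

/-- The complete elliptic integral of the first kind `K(k)`. -/
noncomputable def ellipticK (k : ℝ) : ℝ :=
  ∫ θ in (0 : ℝ)..(π / 2), (1 - k ^ 2 * Real.sin θ ^ 2) ^ (-(1 / 2) : ℝ)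

/-- Kuznetsov's moment integral `I_n^+`, realizing
`(1/2)∫_ℝ x^n dx/(cos(√x K) + cosh(√x K'))` with `√x = i√(−x)` for `x < 0`. -/
noncomputable def Iplus (k : ℝ) (n : ℕ) : ℝ :=
  (1 / 2) * (∫ x in Set.Ioi (0 : ℝ), x ^ n /
      (Real.cos (ellipticK k * Real.sqrt x) +
        Real.cosh (ellipticK (Real.sqrt (1 - k ^ 2)) * Real.sqrt x)))
  + ((-1 : ℝ) ^ n / 2) * (∫ x in Set.Ioi (0 : ℝ), x ^ n /
      (Real.cosh (ellipticK k * Real.sqrt x) +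
        Real.cos (ellipticK (Real.sqrt (1 - k ^ 2)) * Real.sqrt x)))

/-- Kuznetsov's moment integral `I_n^−`, realizing
`∫_ℝ x^{n+1} dx/(cos(√x K) − cosh(√x K'))` with `√x = i√(−x)` for `x < 0`. -/
noncomputable def Iminus (k : ℝ) (n : ℕ) : ℝ :=
  (∫ x in Set.Ioi (0 : ℝ), x ^ (n + 1) /
      (Real.cos (ellipticK k * Real.sqrt x) -
        Real.cosh (ellipticK (Real.sqrt (1 - k ^ 2)) * Real.sqrt x)))
  + (-1 : ℝ) ^ (n + 1) * (∫ x in Set.Ioi (0 : ℝ), x ^ (n + 1) /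
      (Real.cosh (ellipticK k * Real.sqrt x) -
        Real.cos (ellipticK (Real.sqrt (1 - k ^ 2)) * Real.sqrt x)))

/-- The generating-function integral `J(u)`, realizing
`∫_ℝ sin(u√x)/√x · dx/(cos(K√x) + cosh(K'√x))` with `√x = i√(−x)` for `x < 0`. -/
noncomputable def Jgen (k : ℝ) (u : ℝ) : ℝ :=
  (∫ x in Set.Ioi (0 : ℝ), Real.sin (u * Real.sqrt x) /
      (Real.sqrt x * (Real.cos (ellipticK k * Real.sqrt x) +
        Real.cosh (ellipticK (Real.sqrt (1 - k ^ 2)) * Real.sqrt x))))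
  + (∫ x in Set.Ioi (0 : ℝ), Real.sinh (u * Real.sqrt x) /
      (Real.sqrt x * (Real.cosh (ellipticK k * Real.sqrt x) +
        Real.cos (ellipticK (Real.sqrt (1 - k ^ 2)) * Real.sqrt x))))

/-! ### One-sided exponential integrals -/

/-- The weight `1 / (cosh (A t) + cos (B t))`. -/
noncomputable def phi (A B t : ℝ) : ℝ := 1 / (Real.cosh (A * t) + Real.cos (B * t))

/-- The integral `∫₀^∞ e^{u t} f(t) dt`, i.e. the Laplace transform of `f` at `-u`. -/
noncomputable def lap (f : ℝ → ℝ) (u : ℂ) : ℂ :=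
  ∫ t in Set.Ioi (0 : ℝ), Complex.exp (u * t) * (f t : ℂ)

/-- The derivative of `lap f`, obtained by differentiating under the integral sign. -/
noncomputable def lapDeriv (f : ℝ → ℝ) (u : ℂ) : ℂ :=
  ∫ t in Set.Ioi (0 : ℝ), (t : ℂ) * Complex.exp (u * t) * (f t : ℂ)

lemma norm_exp_mul_le {f : ℝ → ℝ} {C a : ℝ} (hb : ∀ t > 0, |f t| ≤ C * Real.exp (-a * t))
    (u : ℂ) (t : ℝ) (ht : 0 < t) :
    ‖Complex.exp (u * t) * (f t : ℂ)‖ ≤ C * Real.exp (-(a - u.re) * t) := by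
  rw [norm_mul, Complex.norm_exp, Complex.norm_real, Real.norm_eq_abs]
  have h1 : (u * (t : ℂ)).re = u.re * t := by simp
  rw [h1]
  calc Real.exp (u.re * t) * |f t| ≤ Real.exp (u.re * t) * (C * Real.exp (-a * t)) := by
        gcongr; exact hb t ht
    _ = C * (Real.exp (u.re * t) * Real.exp (-a * t)) := by ring
    _ = _ := by rw [← Real.exp_add]; ring_nf

lemma lap_integrable {f : ℝ → ℝ} (hf : Measurable f) {C a : ℝ}
    (hb : ∀ t > 0, |f t| ≤ C * Real.exp (-a * t)) {u : ℂ} (hu : u.re < a) :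
    IntegrableOn (fun t : ℝ => Complex.exp (u * t) * (f t : ℂ)) (Set.Ioi 0) := by
  refine Integrable.mono' ((exp_neg_integrableOn_Ioi 0 (sub_pos.2 hu)).const_mul C) ?_ ?_
  · exact (Measurable.mul (by fun_prop) (by fun_prop)).aestronglyMeasurable
  · filter_upwards [ae_restrict_mem measurableSet_Ioi] with t ht
    exact norm_exp_mul_le hb u t ht

lemma lap_hasDerivAt {f : ℝ → ℝ} (hf : Measurable f) {C a : ℝ}
    (hb : ∀ t > 0, |f t| ≤ C * Real.exp (-a * t)) {u : ℂ} (hu : u.re < a) :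
    HasDerivAt (lap f) (lapDeriv f u) u := by
  have hd : 0 < (a - u.re) / 4 := by linarith
  set d := (a - u.re) / 4 with hdd
  have hC : 0 ≤ C := by
    have := (abs_nonneg _).trans (hb 1 one_pos)
    exact nonneg_of_mul_nonneg_left this (Real.exp_pos _)
  have key := hasDerivAt_integral_of_dominated_loc_of_deriv_le
    (μ := volume.restrict (Set.Ioi (0 : ℝ)))
    (F := fun (z : ℂ) (t : ℝ) => Complex.exp (z * t) * (f t : ℂ))
    (F' := fun (z : ℂ) (t : ℝ) => (t : ℂ) * Complex.exp (z * t) * (f t : ℂ))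
    (x₀ := u) (s := Metric.ball u d) (bound := fun t => (C / d) * Real.exp (-d * t))
    (Metric.ball_mem_nhds u hd) ?_ (lap_integrable hf hb hu) ?_ ?_ ?_ ?_
  · exact key.2
  · refine Filter.Eventually.of_forall fun z => ?_
    exact (Measurable.mul (by fun_prop) (by fun_prop)).aestronglyMeasurable
  · exact (Measurable.mul (by fun_prop) (by fun_prop)).aestronglyMeasurable
  · filter_upwards [ae_restrict_mem measurableSet_Ioi] with t ht z hz
    have ht : 0 < t := ht
    have hz' : z.re < u.re + d := by
      have h1 : |(z - u).re| ≤ ‖z - u‖ := Complex.abs_re_le_norm _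
      rw [Metric.mem_ball, dist_eq_norm] at hz
      have h2 := (le_abs_self _).trans h1
      rw [Complex.sub_re] at h2
      linarith
    rw [mul_assoc, norm_mul, Complex.norm_real, Real.norm_eq_abs, abs_of_pos ht]
    have h3 : t ≤ Real.exp (d * t) / d := by
      rw [le_div_iff₀ hd]; nlinarith [Real.add_one_le_exp (d * t)]
    calc t * ‖Complex.exp (z * t) * (f t : ℂ)‖
        ≤ (Real.exp (d * t) / d) * (C * Real.exp (-(a - z.re) * t)) := by
          gcongr; exact norm_exp_mul_le hb z t ht
      _ ≤ (Real.exp (d * t) / d) * (C * Real.exp (-(2 * d) * t)) := by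
          gcongr
          linarith
      _ = (C / d) * (Real.exp (d * t) * Real.exp (-(2 * d) * t)) := by ring
      _ = _ := by rw [← Real.exp_add]; ring_nf
  · exact (exp_neg_integrableOn_Ioi 0 hd).const_mul _
  · refine Filter.Eventually.of_forall fun t z _ => ?_
    have h1 : HasDerivAt (fun z : ℂ => z * (t : ℂ)) (t : ℂ) z := by
      simpa using (hasDerivAt_id z).mul_const (t : ℂ)
    exact ((h1.cexp).mul_const (f t : ℂ)).congr_deriv (by ring)

lemma phi_measurable (A B : ℝ) : Measurable (phi A B) := by
  unfold phi; fun_prop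

/-- `cosh (At) + cos (Bt)` is at least a constant times `e^{At}` on `t ≥ 0`. -/
lemma denom_lower {A B : ℝ} (hA : 0 < A) (hB : 0 < B) :
    ∃ c > 0, ∀ t ≥ 0, c * Real.exp (A * t) ≤ Real.cosh (A * t) + Real.cos (B * t) := by
  set x0 := A * (π / (2 * B)) with hx0
  have hx0p : 0 < x0 := by positivity
  have he : Real.exp (-x0) < 1 := by rw [Real.exp_lt_one_iff]; linarith
  refine ⟨(1 - Real.exp (-x0)) ^ 2 / 2, by have : 0 < 1 - Real.exp (-x0) := by linarith
                                           positivity, fun t ht => ?_⟩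
  have hm : Real.exp (A * t) * Real.exp (-(A * t)) = 1 := by rw [← Real.exp_add]; simp
  have hp := Real.exp_pos (A * t)
  have hp' := Real.exp_pos (-(A * t))
  have hpx := Real.exp_pos (-x0)
  rw [Real.cosh_eq]
  by_cases h : t ≤ π / (2 * B)
  · have hc : 0 ≤ Real.cos (B * t) := by
      apply Real.cos_nonneg_of_neg_pi_div_two_le_of_le
      · have : 0 ≤ B * t := by positivity
        linarith [Real.pi_pos]
      · rw [le_div_iff₀ (by positivity)] at h
        linarith
    have : (1 - Real.exp (-x0)) ^ 2 / 2 ≤ 1 / 2 := by nlinarith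
    nlinarith
  · push Not at h
    have hle : Real.exp (-(A * t)) ≤ Real.exp (-x0) := by
      apply Real.exp_le_exp.2
      have := mul_le_mul_of_nonneg_left h.le hA.le
      linarith
    have h2 : (1 - Real.exp (-x0)) ^ 2 ≤ (1 - Real.exp (-(A * t))) ^ 2 := by
      apply pow_le_pow_left₀ <;> linarith
    have h3 : (1 - Real.exp (-x0)) ^ 2 / 2 * Real.exp (A * t)
        ≤ (1 - Real.exp (-(A * t))) ^ 2 / 2 * Real.exp (A * t) := by gcongr
    have h4 : (1 - Real.exp (-(A * t))) ^ 2 / 2 * Real.exp (A * t)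
        = (Real.exp (A * t) + Real.exp (-(A * t))) / 2 - 1 := by
      linear_combination (-1 + Real.exp (-(A * t)) / 2) * hm
    linarith [Real.neg_one_le_cos (B * t)]

lemma phi_pos {A B : ℝ} (hA : 0 < A) (hB : 0 < B) {t : ℝ} (ht : 0 ≤ t) : 0 < phi A B t := by
  obtain ⟨c, hc, h⟩ := denom_lower hA hB
  unfold phi
  have := h t ht
  have h2 : 0 < c * Real.exp (A * t) := by positivity
  exact one_div_pos.2 (by linarith)

lemma phi_bound {A B : ℝ} (hA : 0 < A) (hB : 0 < B) :
    ∃ C, ∀ t > 0, |phi A B t| ≤ C * Real.exp (-A * t) := by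
  obtain ⟨c, hc, h⟩ := denom_lower hA hB
  refine ⟨1 / c, fun t ht => ?_⟩
  rw [abs_of_pos (phi_pos hA hB ht.le)]
  unfold phi
  have h2 : 0 < c * Real.exp (A * t) := by positivity
  calc _ ≤ 1 / (c * Real.exp (A * t)) := one_div_le_one_div_of_le h2 (h t ht.le)
    _ = _ := by rw [neg_mul, Real.exp_neg]; field_simp

/-- What is left of `phi` after its leading asymptotic term `2 e^{-At}` is removed. -/
noncomputable def rho (A B t : ℝ) : ℝ := phi A B t - 2 * Real.exp (-A * t)

lemma rho_measurable (A B : ℝ) : Measurable (rho A B) := by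
  unfold rho; exact (phi_measurable A B).sub (by fun_prop)

lemma rho_bound {A B : ℝ} (hA : 0 < A) (hB : 0 < B) :
    ∃ C, ∀ t > 0, |rho A B t| ≤ C * Real.exp (-(2 * A) * t) := by
  obtain ⟨C, hC⟩ := phi_bound hA hB
  refine ⟨3 * C, fun t ht => ?_⟩
  have hp := phi_pos hA hB ht.le
  have hD : phi A B t * (Real.cosh (A * t) + Real.cos (B * t)) = 1 := by
    have : Real.cosh (A * t) + Real.cos (B * t) ≠ 0 := by
      intro h0; simp [phi, h0] at hp
    unfold phi; exact one_div_mul_cancel this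
  have he := Real.exp_pos (-A * t)
  have hm : Real.exp (A * t) * Real.exp (-A * t) = 1 := by rw [← Real.exp_add]; simp
  have h1 : rho A B t
      = -(phi A B t * Real.exp (-A * t)) * (Real.exp (-A * t) + 2 * Real.cos (B * t)) := by
    unfold rho
    rw [Real.cosh_eq, show -(A * t) = -A * t by ring] at hD
    linear_combination (2 * Real.exp (-A * t)) * hD - phi A B t * hm
  have hle : Real.exp (-A * t) ≤ 1 := by
    rw [Real.exp_le_one_iff]; nlinarith
  have h2 : |Real.exp (-A * t) + 2 * Real.cos (B * t)| ≤ 3 := by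
    rw [abs_le]; constructor <;> linarith [Real.neg_one_le_cos (B * t), Real.cos_le_one (B * t)]
  rw [h1, abs_mul, abs_neg, abs_mul, abs_of_pos he]
  have hC0 := (abs_nonneg _).trans (hC t ht)
  calc |phi A B t| * Real.exp (-A * t) * |Real.exp (-A * t) + 2 * Real.cos (B * t)|
      ≤ (C * Real.exp (-A * t)) * Real.exp (-A * t) * 3 := by
        gcongr
        exact hC t ht
    _ = 3 * C * (Real.exp (-A * t) * Real.exp (-A * t)) := by ring
    _ = _ := by rw [← Real.exp_add]; ring_nf

/-- The integral of `2 e^{-A t}` produces the pole of `lap (phi A B)` at `A`; the remainder is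
holomorphic for `Re u < 2 A`. -/
lemma lap_phi_eq {A B : ℝ} (hA : 0 < A) (hB : 0 < B) {u : ℂ} (hu : u.re < A) :
    lap (phi A B) u = 2 / (A - u) + lap (rho A B) u := by
  obtain ⟨C, hC⟩ := rho_bound hA hB
  have hi := lap_integrable (rho_measurable A B) hC (u := u) (by linarith)
  have hre : (u - A).re < 0 := by simp; linarith
  have hne : (A : ℂ) - u ≠ 0 := by
    intro h; have := congrArg Complex.re h; simp at this; linarith
  have hne' : u - (A : ℂ) ≠ 0 := by
    intro h; have := congrArg Complex.re h; simp at this; linarith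
  have he : ∫ t in Set.Ioi (0 : ℝ), 2 * Complex.exp ((u - A) * t) = 2 / (A - u) := by
    rw [integral_const_mul, integral_exp_mul_complex_Ioi hre]
    simp
    field_simp
    ring
  have hei : IntegrableOn (fun t : ℝ => 2 * Complex.exp ((u - A) * t)) (Set.Ioi 0) :=
    (integrableOn_exp_mul_complex_Ioi hre 0).const_mul 2
  rw [← he, lap, lap, ← integral_add hei hi]
  congr 1
  ext t
  simp only [rho]
  push_cast
  rw [sub_mul u, Complex.exp_sub, neg_mul, Complex.exp_neg]
  field_simp
  ring

/-! ### Antiperiodicity -/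

/-- The integral `∫₀^∞ 2 sinh (u t) φ_{A,B}(t) dt`, convergent for `|Re u| < A`. -/
noncomputable def sinhLap (A B : ℝ) (u : ℂ) : ℂ := lap (phi A B) u - lap (phi A B) (-u)

/-- The holomorphic extension of `J` to the rectangle `|Re u| < A`, `|Im u| < B`, for `A = K` and
`B = K'`.  The second term equals `∫₀^∞ 2 sin (u t) φ_{B,A}(t) dt`. -/
noncomputable def gen (A B : ℝ) (u : ℂ) : ℂ :=
  sinhLap A B u - Complex.I * sinhLap B A (Complex.I * u)

/-- The integral `∫₀^∞ 2 sinh (u t) / cosh (w t / 2) dt`, convergent for `|Re u| < Re w / 2`. -/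
noncomputable def sech (w u : ℂ) : ℂ :=
  ∫ t in Set.Ioi (0 : ℝ), (Complex.exp (u * t) - Complex.exp (-u * t)) / Complex.cosh (w / 2 * t)

lemma norm_exp_sub_exp_neg_le (w : ℂ) :
    ‖Complex.exp w - Complex.exp (-w)‖ ≤ 2 * ‖w‖ * Real.exp |w.re| := by
  have hconv : Convex ℝ {z : ℂ | z.re ∈ Set.Icc (-|w.re|) |w.re|} :=
    (convex_Icc _ _).linear_preimage Complex.reLm
  have h := hconv.norm_image_sub_le_of_norm_hasDerivWithin_le (f := Complex.exp)
    (f' := Complex.exp) (C := Real.exp |w.re|) (x := -w) (y := w)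
    (fun z _ => (Complex.hasDerivAt_exp z).hasDerivWithinAt)
    (fun z hz => by rw [Complex.norm_exp]; exact Real.exp_le_exp.2 hz.2)
    (by simp only [Set.mem_ofPred_eq, Complex.neg_re, Set.mem_Icc]
        exact ⟨by linarith [le_abs_self w.re], by linarith [neg_abs_le w.re]⟩)
    (by exact ⟨neg_abs_le _, le_abs_self _⟩)
  rw [show w - -w = 2 * w by ring, norm_mul, Complex.norm_ofNat] at h
  linarith

lemma mul_exp_integral_le {b : ℝ} (hb : 0 < b) :
    IntegrableOn (fun t : ℝ => t * Real.exp (-b * t)) (Set.Ioi 0) ∧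
    ∫ t in Set.Ioi (0 : ℝ), t * Real.exp (-b * t) ≤ 4 / b ^ 2 := by
  have hb2 : 0 < b / 2 := by linarith
  have hi := (exp_neg_integrableOn_Ioi 0 hb2).const_mul (2 / b)
  have hle : ∀ t ∈ Set.Ioi (0 : ℝ), t * Real.exp (-b * t) ≤ 2 / b * Real.exp (-(b / 2) * t) := by
    intro t ht
    have h3 : t ≤ 2 / b * Real.exp (b / 2 * t) := by
      have := Real.add_one_le_exp (b / 2 * t)
      calc t = 2 / b * (b / 2 * t) := by field_simp
        _ ≤ _ := by gcongr; linarith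
    calc t * Real.exp (-b * t) ≤ 2 / b * Real.exp (b / 2 * t) * Real.exp (-b * t) := by gcongr
      _ = 2 / b * (Real.exp (b / 2 * t) * Real.exp (-b * t)) := by ring
      _ = _ := by rw [← Real.exp_add]; ring_nf
  have hi1 : IntegrableOn (fun t : ℝ => t * Real.exp (-b * t)) (Set.Ioi 0) := by
    refine Integrable.mono' hi (by fun_prop) ?_
    filter_upwards [ae_restrict_mem measurableSet_Ioi] with t ht
    rw [Real.norm_eq_abs, abs_of_nonneg]
    · exact hle t ht
    · have : (0:ℝ) < t := ht
      positivity
  refine ⟨hi1, (setIntegral_mono_on hi1 hi measurableSet_Ioi hle).trans ?_⟩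
  rw [integral_const_mul, integral_exp_mul_Ioi (by linarith)]
  apply le_of_eq
  simp
  field_simp
  norm_num

/-- Partial fractions of `sech w u`, from integrating `1 / cosh (w t / 2) = 2 ∑ (-1)ⁿ e^{-(2n+1) w t / 2}`
term by term. -/
lemma hasSum_sech {w u : ℂ} (hu : |u.re| < w.re / 2) :
    HasSum (fun n : ℕ => (-1 : ℂ) ^ n * (4 * u / (((2 * n + 1) * w / 2) ^ 2 - u ^ 2)))
      (sech w u) := by
  have hw : 0 < w.re := by linarith [abs_nonneg u.re]
  set F : ℕ → ℝ → ℂ := fun n t => (-1 : ℂ) ^ n * 2 *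
    ((Complex.exp (u * t) - Complex.exp (-u * t)) * Complex.exp (-((2 * n + 1) * w / 2) * t))
    with hF
  have hcre : ∀ n : ℕ, ((2 * (n : ℂ) + 1) * w / 2).re = (2 * n + 1) * w.re / 2 := by
    intro n
    rw [show (2 * (n : ℂ) + 1) * w / 2 = (((2 * n + 1) / 2 : ℝ) : ℂ) * w by push_cast; ring,
      Complex.re_ofReal_mul]
    ring
  have hge : ∀ n : ℕ, w.re / 2 ≤ (2 * n + 1) * w.re / 2 := by
    intro n
    have : 0 ≤ (n : ℝ) * w.re := by positivity
    linarith
  have hr1 : ∀ n : ℕ, (u - (2 * n + 1) * w / 2).re < 0 := by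
    intro n
    rw [Complex.sub_re, hcre]
    linarith [hge n, le_abs_self u.re]
  have hr2 : ∀ n : ℕ, (-u - (2 * n + 1) * w / 2).re < 0 := by
    intro n
    rw [Complex.sub_re, hcre, Complex.neg_re]
    linarith [hge n, neg_abs_le u.re]
  have hFe : ∀ n, F n = fun t : ℝ => (-1 : ℂ) ^ n * 2 *
      (Complex.exp ((u - (2 * n + 1) * w / 2) * t) -
        Complex.exp ((-u - (2 * n + 1) * w / 2) * t)) := by
    intro n
    ext t
    simp only [hF]
    rw [sub_mul, ← Complex.exp_add, ← Complex.exp_add]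
    ring_nf
  have hFi : ∀ n, Integrable (F n) (volume.restrict (Set.Ioi (0 : ℝ))) := by
    intro n
    rw [hFe]
    exact ((integrableOn_exp_mul_complex_Ioi (hr1 n) 0).sub
      (integrableOn_exp_mul_complex_Ioi (hr2 n) 0)).const_mul _
  have hFint : ∀ n, ∫ t in Set.Ioi (0 : ℝ), F n t
      = (-1 : ℂ) ^ n * (4 * u / (((2 * n + 1) * w / 2) ^ 2 - u ^ 2)) := by
    intro n
    rw [hFe, integral_const_mul, integral_sub (integrableOn_exp_mul_complex_Ioi (hr1 n) 0)
      (integrableOn_exp_mul_complex_Ioi (hr2 n) 0), integral_exp_mul_complex_Ioi (hr1 n),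
      integral_exp_mul_complex_Ioi (hr2 n)]
    have h1 : u - (2 * n + 1) * w / 2 ≠ 0 := by
      intro h; have := hr1 n; rw [h] at this; simp at this
    have h2 : -u - (2 * n + 1) * w / 2 ≠ 0 := by
      intro h; have := hr2 n; rw [h] at this; simp at this
    generalize (2 * (n : ℂ) + 1) * w / 2 = c at *
    have h3 : c ^ 2 - u ^ 2 ≠ 0 := by
      rw [show c ^ 2 - u ^ 2 = (u - c) * (-u - c) by ring]
      exact mul_ne_zero h1 h2
    rw [mul_assoc]
    congr 1
    simp only [Complex.ofReal_zero, mul_zero, Complex.exp_zero]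
    rw [eq_div_iff h3]
    field_simp
    ring
  set d : ℝ := w.re / 2 - |u.re| with hd
  have hdpos : 0 < d := by linarith
  have hsum : Summable fun n => ∫ t in Set.Ioi (0 : ℝ), ‖F n t‖ := by
    have hS : Summable fun n : ℕ => 16 * ‖u‖ / d ^ 2 * (1 / ((n : ℝ) + 1) ^ 2) := by
      apply Summable.mul_left
      have := (summable_nat_add_iff 1).2 (Real.summable_one_div_nat_pow.2 (one_lt_two))
      simpa using this
    refine Summable.of_nonneg_of_le (fun n => integral_nonneg fun t => norm_nonneg _) (fun n => ?_) hS
    set b : ℝ := (2 * n + 1) * w.re / 2 - |u.re| with hbdef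
    have hb : (n + 1) * d ≤ b := by
      have : (n : ℝ) * d ≤ n * w.re := by
        gcongr
        linarith [abs_nonneg u.re]
      rw [hbdef, add_mul, one_mul]
      linarith
    have hbpos : 0 < b := lt_of_lt_of_le (by positivity) hb
    obtain ⟨hi, hle⟩ := mul_exp_integral_le hbpos
    calc ∫ t in Set.Ioi (0 : ℝ), ‖F n t‖
        ≤ ∫ t in Set.Ioi (0 : ℝ), 4 * ‖u‖ * (t * Real.exp (-b * t)) := by
          refine setIntegral_mono_on (hFi n).norm (hi.const_mul _) measurableSet_Ioi ?_
          intro t ht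
          have ht : 0 < t := ht
          simp only [hF]
          rw [norm_mul, norm_mul, norm_mul, norm_pow, norm_neg, norm_one, one_pow, one_mul,
            Complex.norm_ofNat, Complex.norm_exp]
          have h1 := norm_exp_sub_exp_neg_le (u * t)
          rw [norm_mul, Complex.norm_real, Real.norm_eq_abs, abs_of_pos ht, Complex.re_mul_ofReal,
            abs_mul, abs_of_pos ht, ← neg_mul] at h1
          rw [Complex.re_mul_ofReal, Complex.neg_re, hcre]
          calc _ ≤ 2 * (2 * (‖u‖ * t) * Real.exp (|u.re| * t)
                * Real.exp (-((2 * n + 1) * w.re / 2) * t)) := by gcongr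
            _ = 4 * ‖u‖ * (t * (Real.exp (|u.re| * t)
                * Real.exp (-((2 * n + 1) * w.re / 2) * t))) := by ring
            _ = _ := by rw [← Real.exp_add, hbdef]; ring_nf
      _ ≤ 4 * ‖u‖ * (4 / b ^ 2) := by rw [integral_const_mul]; gcongr
      _ ≤ 4 * ‖u‖ * (4 / ((n + 1) * d) ^ 2) := by gcongr
      _ = _ := by field_simp; ring
  have key := hasSum_integral_of_summable_integral_norm hFi hsum
  simp only [hFint] at key
  have hcongr : sech w u = ∫ t in Set.Ioi (0 : ℝ), ∑' n, F n t := ?_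
  · rw [hcongr]; exact key
  unfold sech
  refine setIntegral_congr_fun measurableSet_Ioi fun t ht => ?_
  have ht : 0 < t := ht
  have hq : ‖-Complex.exp (-w * t)‖ < 1 := by
    rw [norm_neg, Complex.norm_exp, Complex.re_mul_ofReal, Complex.neg_re, Real.exp_lt_one_iff]
    nlinarith
  have hg := ((hasSum_geometric_of_norm_lt_one hq).mul_left
    (2 * (Complex.exp (u * t) - Complex.exp (-u * t)) * Complex.exp (-(w / 2 * t)))).tsum_eq
  have hne : 1 + Complex.exp (-w * t) ≠ 0 := by
    intro h
    have h2 : -Complex.exp (-w * t) = 1 := by linear_combination -h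
    rw [h2, norm_one] at hq
    exact lt_irrefl _ hq
  have hch : Complex.cosh (w / 2 * t) * (2 * Complex.exp (-(w / 2 * t)))
      = 1 + Complex.exp (-w * t) := by
    rw [Complex.cosh, show -w * (t : ℂ) = -(w / 2 * t) + -(w / 2 * t) by ring, Complex.exp_add]
    have : Complex.exp (w / 2 * t) * Complex.exp (-(w / 2 * t)) = 1 := by
      rw [← Complex.exp_add]; simp
    linear_combination this
  have hc0 : Complex.cosh (w / 2 * t) ≠ 0 := by
    intro h; rw [h, zero_mul] at hch; exact hne hch.symm
  have hterm : ∀ n, F n t = 2 * (Complex.exp (u * t) - Complex.exp (-u * t))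
      * Complex.exp (-(w / 2 * t)) * (-Complex.exp (-w * t)) ^ n := by
    intro n
    simp only [hF]
    rw [neg_pow (Complex.exp (-w * t)), ← Complex.exp_nat_mul,
      show -((2 * (n : ℂ) + 1) * w / 2) * t = -(w / 2 * t) + n * (-w * t) by ring, Complex.exp_add]
    ring
  simp only [hterm]
  rw [hg, sub_neg_eq_add, ← hch]
  have := Complex.exp_ne_zero (-(w / 2 * t))
  field_simp

/-- Both integrals converge and have termwise proportional partial fraction series, which replaces a
rotation of the contour of integration by a right angle. -/
lemma sech_rotate {w u : ℂ} (h1 : |u.re| < w.re / 2) (h2 : |u.im| < w.im / 2) :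
    sech (-Complex.I * w) (Complex.I * u) = -Complex.I * sech w u := by
  have a := hasSum_sech (w := -Complex.I * w) (u := Complex.I * u) (by simpa using h2)
  have b := (hasSum_sech h1).mul_left (-Complex.I)
  refine a.unique (b.congr_fun ?_)
  intro n
  have : ((2 * (n : ℂ) + 1) * (-Complex.I * w) / 2) ^ 2 - (Complex.I * u) ^ 2
      = -(((2 * n + 1) * w / 2) ^ 2 - u ^ 2) := by
    linear_combination (((2 * (n : ℂ) + 1) * w / 2) ^ 2 - u ^ 2) * Complex.I_sq
  rw [this, div_neg]
  ring

/-- With `w = (A + i B') / 2`, adding the values at `u ± w` produces the factor `2 cosh (w t)`, which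
cancels one factor of `cosh (A t) + cos (B t) = 2 cosh (w t) cosh (w̄ t)`. -/
lemma sinhLap_sum {A B B' : ℝ} (hA : 0 < A) (hB : 0 < B) (hB' : B' = B ∨ B' = -B) {u : ℂ}
    (hu : |u.re| < A / 2) :
    sinhLap A B (u + (A + B' * Complex.I) / 2) + sinhLap A B (u - (A + B' * Complex.I) / 2)
      = sech (A - B' * Complex.I) u := by
  obtain ⟨C, hC⟩ := phi_bound hA hB
  obtain ⟨hu1, hu2⟩ := abs_lt.1 hu
  set w : ℂ := (A + B' * Complex.I) / 2 with hw
  have hwre : w.re = A / 2 := by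
    rw [hw, show ((A : ℂ) + B' * Complex.I) / 2 = ((A / 2 : ℝ) : ℂ) + ((B' / 2 : ℝ) : ℂ) * Complex.I
      by push_cast; ring]
    simp
  have i1 := lap_integrable (phi_measurable A B) hC (u := u + w) (by rw [Complex.add_re, hwre]; linarith)
  have i2 := lap_integrable (phi_measurable A B) hC (u := -(u + w))
    (by rw [Complex.neg_re, Complex.add_re, hwre]; linarith)
  have i3 := lap_integrable (phi_measurable A B) hC (u := u - w) (by rw [Complex.sub_re, hwre]; linarith)
  have i4 := lap_integrable (phi_measurable A B) hC (u := -(u - w))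
    (by rw [Complex.neg_re, Complex.sub_re, hwre]; linarith)
  unfold sinhLap lap sech
  rw [← integral_sub i1 i2, ← integral_sub i3 i4]
  have i5 := i1.sub i2
  have i6 := i3.sub i4
  simp only [Pi.sub_def] at i5 i6
  rw [← integral_add i5 i6]
  refine setIntegral_congr_fun measurableSet_Ioi fun t ht => ?_
  have ht : 0 < t := ht
  have hp := phi_pos hA hB ht.le
  have hprod : 2 * Complex.cosh (w * t) * Complex.cosh ((A - B' * Complex.I) / 2 * t)
      = ((Real.cosh (A * t) + Real.cos (B * t) : ℝ) : ℂ) := by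
    have hcos : Real.cos (B * t) = Real.cos (B' * t) := by
      rcases hB' with h | h <;> simp [h]
    rw [hcos]
    push_cast
    rw [← Complex.cosh_mul_I, show (A : ℂ) * t = w * t + (A - B' * Complex.I) / 2 * t by rw [hw]; ring,
      show (B' : ℂ) * t * Complex.I = w * t - (A - B' * Complex.I) / 2 * t by rw [hw]; ring,
      Complex.cosh_add, Complex.cosh_sub]
    ring
  have hD : Real.cosh (A * t) + Real.cos (B * t) ≠ 0 := by
    intro h0; simp [phi, h0] at hp
  have hDC : ((Real.cosh (A * t) + Real.cos (B * t) : ℝ) : ℂ) ≠ 0 := by exact_mod_cast hD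
  have hc2 : Complex.cosh ((A - B' * Complex.I) / 2 * t) ≠ 0 := by
    intro h; rw [h, mul_zero] at hprod; exact hDC hprod.symm
  simp only [phi]
  rw [Complex.ofReal_div, Complex.ofReal_one, ← hprod, eq_div_iff hc2]
  have hc1 : Complex.cosh (w * t) ≠ 0 := by
    intro h; rw [h, mul_zero, zero_mul] at hprod; exact hDC hprod.symm
  have e1 : Complex.exp ((u + w) * t) = Complex.exp (u * t) * Complex.exp (w * t) := by
    rw [← Complex.exp_add]; ring_nf
  have e2 : Complex.exp (-(u + w) * t) = Complex.exp (-u * t) * Complex.exp (-(w * t)) := by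
    rw [← Complex.exp_add]; ring_nf
  have e3 : Complex.exp ((u - w) * t) = Complex.exp (u * t) * Complex.exp (-(w * t)) := by
    rw [← Complex.exp_add]; ring_nf
  have e4 : Complex.exp (-(u - w) * t) = Complex.exp (-u * t) * Complex.exp (w * t) := by
    rw [← Complex.exp_add]; ring_nf
  rw [e1, e2, e3, e4]
  have hcd : Complex.exp (w * t) + Complex.exp (-(w * t)) = 2 * Complex.cosh (w * t) := by
    rw [Complex.cosh]; ring
  generalize Complex.cosh ((A - B' * Complex.I) / 2 * t) = y at *
  generalize Complex.cosh (w * t) = x at *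
  generalize Complex.exp (w * t) = p at *
  generalize Complex.exp (-(w * t)) = q at *
  generalize Complex.exp (u * t) = r at *
  generalize Complex.exp (-u * t) = s at *
  field_simp
  linear_combination (r - s) * hcd

lemma sinhLap_neg (A B : ℝ) (u : ℂ) : sinhLap A B (-u) = -sinhLap A B u := by
  simp [sinhLap]

lemma gen_neg (A B : ℝ) (u : ℂ) : gen A B (-u) = -gen A B u := by
  simp [gen, sinhLap_neg]; ring

lemma gen_I_mul (A B : ℝ) (u : ℂ) : gen A B (Complex.I * u) = Complex.I * gen B A u := by
  unfold gen
  rw [← mul_assoc, Complex.I_mul_I, neg_one_mul, sinhLap_neg]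
  linear_combination (sinhLap A B (Complex.I * u)) * Complex.I_mul_I

/-- Antiperiodicity under `A - iB`. -/
lemma gen_add_conj {A B : ℝ} (hA : 0 < A) (hB : 0 < B) {v : ℂ} (h1 : -A < v.re) (h2 : v.re < 0)
    (h3 : 0 < v.im) (h4 : v.im < B) :
    gen A B (v + (A - B * Complex.I)) = -gen A B v := by
  set u : ℂ := v + (A - B * Complex.I) / 2 with hu
  have e : ((A : ℂ) - B * Complex.I) / 2 = ((A / 2 : ℝ) : ℂ) - ((B / 2 : ℝ) : ℂ) * Complex.I := by
    push_cast; ring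
  have hre : |u.re| < A / 2 := by
    rw [hu, e]; simp [abs_lt]; constructor <;> linarith
  have him : |u.im| < B / 2 := by
    rw [hu, e]; simp [abs_lt]; constructor <;> linarith
  have s1 := sinhLap_sum hA hB (B' := -B) (Or.inr rfl) hre
  have s2 := sinhLap_sum hB hA (B' := A) (Or.inl rfl) (u := Complex.I * u) (by simpa using him)
  have r := sech_rotate (w := A + B * Complex.I) (u := u) (by simpa using hre) (by simpa using him)
  have e1 : v + (A - B * Complex.I) = u + (A + (-B : ℝ) * Complex.I) / 2 := by
    rw [hu]; push_cast; ring
  have e2 : v = u - (A + (-B : ℝ) * Complex.I) / 2 := by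
    rw [hu]; push_cast; ring
  have e3 : Complex.I * (v + (A - B * Complex.I)) = Complex.I * u + (B + A * Complex.I) / 2 := by
    rw [hu]; linear_combination (-(B : ℂ) / 2) * Complex.I_sq
  have e4 : Complex.I * v = Complex.I * u - (B + A * Complex.I) / 2 := by
    rw [hu]; linear_combination ((B : ℂ) / 2) * Complex.I_sq
  have e5 : (A : ℂ) - (-B : ℝ) * Complex.I = A + B * Complex.I := by push_cast; ring
  have e6 : (B : ℂ) - A * Complex.I = -Complex.I * (A + B * Complex.I) := by
    linear_combination (B : ℂ) * Complex.I_sq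
  rw [e5] at s1
  rw [e6, r, ← e3, ← e4] at s2
  rw [← e1, ← e2] at s1
  unfold gen
  linear_combination s1 - Complex.I * s2 + sech (A + B * Complex.I) u * Complex.I_sq

/-- Antiperiodicity under `A + iB`. -/
lemma gen_add {A B : ℝ} (hA : 0 < A) (hB : 0 < B) {v : ℂ} (h1 : -A < v.re) (h2 : v.re < 0)
    (h3 : -B < v.im) (h4 : v.im < 0) :
    gen A B (v + (A + B * Complex.I)) = -gen A B v := by
  have h := gen_add_conj hB hA (v := -Complex.I * v) (by simpa using h3) (by simpa using h4)
    (by simpa using h2) (by simp; linarith)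
  have e1 : v = Complex.I * (-Complex.I * v) := by
    linear_combination v * Complex.I_sq
  have e2 : v + (A + B * Complex.I) = Complex.I * (-Complex.I * v + (B - A * Complex.I)) := by
    linear_combination (v + A) * Complex.I_sq
  rw [e2, gen_I_mul, h]
  nth_rw 2 [e1]
  rw [gen_I_mul]
  ring

/-! ### The reflection formula up to a constant -/

/-- The open rectangle `|Re z| < A`, `|Im z| < B`. -/
noncomputable def rect (A B : ℝ) : Set ℂ := {z | |z.re| < A ∧ |z.im| < B}

lemma rect_eq (A B : ℝ) : rect A B = Set.Ioo (-A) A ×ℂ Set.Ioo (-B) B := by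
  ext z; simp [rect, Complex.mem_reProdIm, abs_lt]

lemma isOpen_rect (A B : ℝ) : IsOpen (rect A B) := by
  rw [rect_eq]; exact isOpen_Ioo.reProdIm isOpen_Ioo

lemma isPreconnected_reProdIm (a b c d : ℝ) :
    IsPreconnected (Set.Ioo a b ×ℂ Set.Ioo c d) := by
  apply Convex.isPreconnected
  have : Set.Ioo a b ×ℂ Set.Ioo c d
      = Complex.reLm ⁻¹' Set.Ioo a b ∩ Complex.imLm ⁻¹' Set.Ioo c d := rfl
  rw [this]
  exact ((convex_Ioo _ _).linear_preimage _).inter ((convex_Ioo _ _).linear_preimage _)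

lemma zero_mem_rect {A B : ℝ} (hA : 0 < A) (hB : 0 < B) : (0 : ℂ) ∈ rect A B := by
  simp [rect, hA, hB]

/-- A function holomorphic on the rectangle with periods `A` and `i B` takes all its values on the
closed half-size rectangle, so its modulus has an interior maximum. -/
lemma const_of_periodic {A B : ℝ} (hA : 0 < A) (hB : 0 < B) {h : ℂ → ℂ}
    (hd : DifferentiableOn ℂ h (rect A B))
    (h1 : ∀ u ∈ rect A B, u + A ∈ rect A B → h (u + A) = h u)
    (h2 : ∀ u ∈ rect A B, u + B * Complex.I ∈ rect A B → h (u + B * Complex.I) = h u) :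
    ∀ u ∈ rect A B, h u = h 0 := by
  set Q : Set ℂ := Set.Icc (-(A / 2)) (A / 2) ×ℂ Set.Icc (-(B / 2)) (B / 2) with hQ
  have hQc : IsCompact Q := isCompact_Icc.reProdIm isCompact_Icc
  have hQs : Q ⊆ rect A B := by
    intro z hz
    rw [hQ, Complex.mem_reProdIm] at hz
    obtain ⟨⟨a, b⟩, c, d⟩ := hz
    exact ⟨abs_lt.2 ⟨by linarith, by linarith⟩, abs_lt.2 ⟨by linarith, by linarith⟩⟩
  have hred1 : ∀ u ∈ rect A B, ∃ v ∈ rect A B, |v.re| ≤ A / 2 ∧ h v = h u := by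
    intro u hu
    have hu' := hu
    obtain ⟨ha, hb⟩ := hu'
    obtain ⟨ha1, ha2⟩ := abs_lt.1 ha
    rcases lt_or_ge (A / 2) u.re with hc | hc
    · have hm : u - A ∈ rect A B := ⟨by simp [abs_lt]; constructor <;> linarith, by simpa using hb⟩
      refine ⟨u - A, hm, by simp [abs_le]; constructor <;> linarith, ?_⟩
      have := h1 (u - A) hm (by simpa using hu)
      simpa using this.symm
    rcases lt_or_ge u.re (-(A / 2)) with hc' | hc'
    · have hm : u + A ∈ rect A B := ⟨by simp [abs_lt]; constructor <;> linarith, by simpa using hb⟩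
      exact ⟨u + A, hm, by simp [abs_le]; constructor <;> linarith, h1 u hu hm⟩
    · exact ⟨u, hu, abs_le.2 ⟨hc', hc⟩, rfl⟩
  have hred2 : ∀ u ∈ rect A B, |u.re| ≤ A / 2 → ∃ v ∈ Q, h v = h u := by
    intro u hu hr
    have hu' := hu
    obtain ⟨ha, hb⟩ := hu'
    obtain ⟨hb1, hb2⟩ := abs_lt.1 hb
    have hr' := abs_le.1 hr
    rcases lt_or_ge (B / 2) u.im with hc | hc
    · have hm : u - B * Complex.I ∈ rect A B :=
        ⟨by simpa using ha, by simp [abs_lt]; constructor <;> linarith⟩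
      refine ⟨u - B * Complex.I, ?_, ?_⟩
      · rw [hQ, Complex.mem_reProdIm]
        exact ⟨by simpa using hr', by simp; constructor <;> linarith⟩
      have := h2 (u - B * Complex.I) hm (by simpa using hu)
      simpa using this.symm
    rcases lt_or_ge u.im (-(B / 2)) with hc' | hc'
    · have hm : u + B * Complex.I ∈ rect A B :=
        ⟨by simpa using ha, by simp [abs_lt]; constructor <;> linarith⟩
      refine ⟨u + B * Complex.I, ?_, h2 u hu hm⟩
      rw [hQ, Complex.mem_reProdIm]
      exact ⟨by simpa using hr', by simp; constructor <;> linarith⟩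
    · exact ⟨u, ⟨hr', hc', hc⟩, rfl⟩
  obtain ⟨z, hz, hmax⟩ := hQc.exists_isMaxOn
    ⟨0, by rw [hQ, Complex.mem_reProdIm]; simp; constructor <;> linarith⟩
    ((hd.mono hQs).continuousOn.norm)
  have hmax' : IsMaxOn (norm ∘ h) (rect A B) z := by
    intro u hu
    obtain ⟨v, hv, hvr, e1⟩ := hred1 u hu
    obtain ⟨y, hy, e2⟩ := hred2 v hv hvr
    have := hmax hy
    simp only [Set.mem_ofPred_eq, Function.comp] at this ⊢
    rwa [e2, e1] at this
  have hpre : IsPreconnected (rect A B) := by rw [rect_eq]; exact isPreconnected_reProdIm _ _ _ _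
  have heq := Complex.eqOn_of_isPreconnected_of_isMaxOn_norm hpre (isOpen_rect A B) hd (hQs hz) hmax'
  intro u hu
  have a := heq hu
  have b := heq (zero_mem_rect hA hB)
  simp only [Function.const] at a b
  rw [a, b]

/-- The identity theorem on an open rectangle. -/
lemma eqOn_reProdIm {a b c d : ℝ} {f g : ℂ → ℂ}
    (hf : DifferentiableOn ℂ f (Set.Ioo a b ×ℂ Set.Ioo c d))
    (hg : DifferentiableOn ℂ g (Set.Ioo a b ×ℂ Set.Ioo c d)) {V : Set ℂ} (hV : IsOpen V)
    {z : ℂ} (hz : z ∈ V) (hzU : z ∈ Set.Ioo a b ×ℂ Set.Ioo c d)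
    (h : ∀ u ∈ V, u ∈ Set.Ioo a b ×ℂ Set.Ioo c d → f u = g u) :
    ∀ u ∈ Set.Ioo a b ×ℂ Set.Ioo c d, f u = g u := by
  have ho : IsOpen (Set.Ioo a b ×ℂ Set.Ioo c d) := isOpen_Ioo.reProdIm isOpen_Ioo
  refine (hf.analyticOnNhd ho).eqOn_of_preconnected_of_eventuallyEq (hg.analyticOnNhd ho)
    (isPreconnected_reProdIm _ _ _ _) hzU ?_
  filter_upwards [hV.mem_nhds hz, ho.mem_nhds hzU] with u hu hmem
  exact h u hu hmem

/-- The derivative of `sinhLap A B`. -/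
noncomputable def sinhLapDeriv (A B : ℝ) (u : ℂ) : ℂ :=
  lapDeriv (phi A B) u + lapDeriv (phi A B) (-u)

lemma sinhLap_hasDerivAt {A B : ℝ} (hA : 0 < A) (hB : 0 < B) {u : ℂ} (hu : |u.re| < A) :
    HasDerivAt (sinhLap A B) (sinhLapDeriv A B u) u := by
  obtain ⟨C, hC⟩ := phi_bound hA hB
  obtain ⟨h1, h2⟩ := abs_lt.1 hu
  have a := lap_hasDerivAt (phi_measurable A B) hC h2
  have b := lap_hasDerivAt (phi_measurable A B) hC (u := -u) (by simp; linarith)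
  have b' := b.scomp u (hasDerivAt_neg u)
  refine (a.sub b').congr_deriv ?_
  simp [sinhLapDeriv]

/-- The derivative of `gen A B`. -/
noncomputable def genDeriv (A B : ℝ) (u : ℂ) : ℂ :=
  sinhLapDeriv A B u + sinhLapDeriv B A (Complex.I * u)

lemma gen_hasDerivAt {A B : ℝ} (hA : 0 < A) (hB : 0 < B) {u : ℂ} (hu : u ∈ rect A B) :
    HasDerivAt (gen A B) (genDeriv A B u) u := by
  have a := sinhLap_hasDerivAt hA hB hu.1
  have b := sinhLap_hasDerivAt hB hA (u := Complex.I * u) (by simpa using hu.2)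
  have hI : HasDerivAt (fun z : ℂ => Complex.I * z) Complex.I u := by
    simpa using (hasDerivAt_id u).const_mul Complex.I
  have b' := (b.scomp u hI).const_mul Complex.I
  refine (a.sub b').congr_deriv ?_
  rw [genDeriv, smul_eq_mul]
  linear_combination (-sinhLapDeriv B A (Complex.I * u)) * Complex.I_sq

lemma gen_differentiableOn {A B : ℝ} (hA : 0 < A) (hB : 0 < B) :
    DifferentiableOn ℂ (gen A B) (rect A B) := fun _ hu =>
  (gen_hasDerivAt hA hB hu).differentiableAt.differentiableWithinAt

/-- The regular part of `gen A B (A - u)` at its pole `u = 0`. -/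
noncomputable def reg (A B : ℝ) (u : ℂ) : ℂ :=
  lap (rho A B) (A - u) - lap (phi A B) (u - A) - Complex.I * sinhLap B A (Complex.I * (A - u))

lemma reg_differentiableAt {A B : ℝ} (hA : 0 < A) (hB : 0 < B) {u : ℂ} (hu : u ∈ rect A B) :
    DifferentiableAt ℂ (reg A B) u := by
  obtain ⟨C, hC⟩ := phi_bound hA hB
  obtain ⟨C', hC'⟩ := rho_bound hA hB
  obtain ⟨hr, hi⟩ := hu
  obtain ⟨h1, h2⟩ := abs_lt.1 hr
  have a := (lap_hasDerivAt (rho_measurable A B) hC' (u := A - u) (by simp; linarith)).differentiableAt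
  have b := (lap_hasDerivAt (phi_measurable A B) hC (u := u - A) (by simp; linarith)).differentiableAt
  have c := (sinhLap_hasDerivAt hB hA (u := Complex.I * (A - u)) (by simpa using hi)).differentiableAt
  have a' := DifferentiableAt.comp u a (by fun_prop : DifferentiableAt ℂ (fun z : ℂ => (A : ℂ) - z) u)
  have b' := DifferentiableAt.comp u b (by fun_prop : DifferentiableAt ℂ (fun z : ℂ => z - (A : ℂ)) u)
  have c' := DifferentiableAt.comp u c
    (by fun_prop : DifferentiableAt ℂ (fun z : ℂ => Complex.I * ((A : ℂ) - z)) u)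
  exact (a'.sub b').sub (c'.const_mul _)

lemma gen_sub_eq {A B : ℝ} (hA : 0 < A) (hB : 0 < B) {u : ℂ} (h1 : 0 < u.re) :
    gen A B (A - u) = 2 / u + reg A B u := by
  unfold gen reg
  have := lap_phi_eq hA hB (u := A - u) (by simpa using h1)
  rw [sinhLap, this, neg_sub, sub_sub_cancel]
  ring

/-- For `Re u > 0` this is antiperiodicity under `A + i B`; it extends to `Re u ≤ 0` by analytic
continuation. -/
lemma reg_lower {A B : ℝ} (hA : 0 < A) (hB : 0 < B) {u : ℂ} (hu : u ∈ rect A B) (hi : u.im < 0) :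
    2 / u + reg A B u = gen A B (u + B * Complex.I) := by
  have hmem : ∀ z : ℂ, z ∈ Set.Ioo (-A) A ×ℂ Set.Ioo (-B) 0 →
      z ∈ rect A B ∧ z + B * Complex.I ∈ rect A B ∧ z ≠ 0 := by
    rintro z ⟨⟨a, b⟩, c, d⟩
    refine ⟨⟨abs_lt.2 ⟨a, b⟩, abs_lt.2 ⟨c, by linarith⟩⟩, ⟨?_, ?_⟩, ?_⟩
    · simpa using abs_lt.2 ⟨a, b⟩
    · simp [abs_lt]; constructor <;> linarith
    · rintro rfl; simp at d
  refine eqOn_reProdIm (a := -A) (b := A) (c := -B) (d := 0) (f := fun z => 2 / z + reg A B z)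
    (g := fun z => gen A B (z + B * Complex.I)) ?_ ?_
    (V := {z | 0 < z.re}) (isOpen_lt continuous_const Complex.continuous_re)
    (z := ((A / 2 : ℝ) : ℂ) - ((B / 2 : ℝ) : ℂ) * Complex.I) ?_ ?_ ?_ u
    ⟨abs_lt.1 hu.1, (abs_lt.1 hu.2).1, hi⟩
  · intro z hz
    obtain ⟨hm, -, h0⟩ := hmem z hz
    exact ((differentiableAt_const _).div differentiableAt_id h0).add
      (reg_differentiableAt hA hB hm) |>.differentiableWithinAt
  · intro z hz
    obtain ⟨-, hm, -⟩ := hmem z hz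
    exact (DifferentiableAt.comp z (gen_hasDerivAt hA hB hm).differentiableAt
      (by fun_prop : DifferentiableAt ℂ (fun z : ℂ => z + B * Complex.I) z)).differentiableWithinAt
  · simp; linarith
  · rw [Complex.mem_reProdIm]; simp; grind
  · rintro z hz ⟨⟨a, b⟩, c, d⟩
    have hz : 0 < z.re := hz
    have h := gen_add hA hB (v := -(z + B * Complex.I)) (by simp; linarith) (by simp; linarith)
      (by simp; linarith) (by simp; linarith)
    rw [← gen_sub_eq hA hB hz, show (A : ℂ) - z = -(z + B * Complex.I) + (A + B * Complex.I) by ring,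
      h, gen_neg, neg_neg]

/-- The counterpart of `reg_lower` in the upper half of the rectangle, from antiperiodicity under
`A - i B`. -/
lemma reg_upper {A B : ℝ} (hA : 0 < A) (hB : 0 < B) {u : ℂ} (hu : u ∈ rect A B) (hi : 0 < u.im) :
    2 / u + reg A B u = gen A B (u - B * Complex.I) := by
  have hmem : ∀ z : ℂ, z ∈ Set.Ioo (-A) A ×ℂ Set.Ioo 0 B →
      z ∈ rect A B ∧ z - B * Complex.I ∈ rect A B ∧ z ≠ 0 := by
    rintro z ⟨⟨a, b⟩, c, d⟩
    refine ⟨⟨abs_lt.2 ⟨a, b⟩, abs_lt.2 ⟨by linarith, d⟩⟩, ⟨?_, ?_⟩, ?_⟩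
    · simpa using abs_lt.2 ⟨a, b⟩
    · simp [abs_lt]; constructor <;> linarith
    · rintro rfl; simp at c
  refine eqOn_reProdIm (a := -A) (b := A) (c := 0) (d := B) (f := fun z => 2 / z + reg A B z)
    (g := fun z => gen A B (z - B * Complex.I)) ?_ ?_
    (V := {z | 0 < z.re}) (isOpen_lt continuous_const Complex.continuous_re)
    (z := ((A / 2 : ℝ) : ℂ) + ((B / 2 : ℝ) : ℂ) * Complex.I) ?_ ?_ ?_ u
    ⟨abs_lt.1 hu.1, hi, (abs_lt.1 hu.2).2⟩
  · intro z hz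
    obtain ⟨hm, -, h0⟩ := hmem z hz
    exact ((differentiableAt_const _).div differentiableAt_id h0).add
      (reg_differentiableAt hA hB hm) |>.differentiableWithinAt
  · intro z hz
    obtain ⟨-, hm, -⟩ := hmem z hz
    exact (DifferentiableAt.comp z (gen_hasDerivAt hA hB hm).differentiableAt
      (by fun_prop : DifferentiableAt ℂ (fun z : ℂ => z - B * Complex.I) z)).differentiableWithinAt
  · simp; linarith
  · rw [Complex.mem_reProdIm]; simp; grind
  · rintro z hz ⟨⟨a, b⟩, c, d⟩
    have hz : 0 < z.re := hz
    have h := gen_add_conj hA hB (v := -(z - B * Complex.I)) (by simp; linarith) (by simp; linarith)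
      (by simp; linarith) (by simp; linarith)
    rw [← gen_sub_eq hA hB hz, show (A : ℂ) - z = -(z - B * Complex.I) + (A - B * Complex.I) by ring,
      h, gen_neg, neg_neg]

lemma neg_mem_rect {A B : ℝ} {u : ℂ} (hu : u ∈ rect A B) : -u ∈ rect A B := by
  simpa [rect] using hu

lemma reg_neg {A B : ℝ} (hA : 0 < A) (hB : 0 < B) {u : ℂ} (hu : u ∈ rect A B) :
    reg A B (-u) = -reg A B u := by
  rw [rect_eq] at hu
  refine eqOn_reProdIm (f := fun z => reg A B (-z)) (g := fun z => -reg A B z) ?_ ?_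
    (V := {z | z.im < 0}) (isOpen_lt Complex.continuous_im continuous_const)
    (z := -((B / 2 : ℝ) : ℂ) * Complex.I) ?_ ?_ ?_ u hu
  · rw [← rect_eq]
    intro z hz
    exact (DifferentiableAt.comp z (reg_differentiableAt hA hB (neg_mem_rect hz))
      (by fun_prop : DifferentiableAt ℂ (fun z : ℂ => -z) z)).differentiableWithinAt
  · rw [← rect_eq]
    intro z hz
    exact (reg_differentiableAt hA hB hz).neg.differentiableWithinAt
  · simp; linarith
  · rw [Complex.mem_reProdIm]; simp; refine ⟨?_, ?_, ?_⟩ <;> linarith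
  · intro z hz hzr
    rw [← rect_eq] at hzr
    have hz : z.im < 0 := hz
    have a := reg_lower hA hB hzr hz
    have b := reg_upper hA hB (neg_mem_rect hzr) (by simpa using hz)
    rw [show -z - B * Complex.I = -(z + B * Complex.I) by ring, gen_neg, ← a, div_neg] at b
    linear_combination b

lemma gen_add_real {A B : ℝ} (hA : 0 < A) (hB : 0 < B) {u : ℂ} (hu : u ∈ rect A B)
    (hr : u.re < 0) : gen A B (u + A) = -(2 / u + reg A B u) := by
  have := gen_sub_eq hA hB (u := -u) (by simpa using hr)
  rw [reg_neg hA hB hu, sub_neg_eq_add, add_comm] at this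
  rw [this, div_neg]; ring

lemma gen_zero (A B : ℝ) : gen A B 0 = 0 := by simp [gen, sinhLap]

/-- By `gen_sub_eq` and `gen_add_real` the left side is invariant under `u ↦ u + A`, and by `reg_lower`
and `reg_upper` under `u ↦ u + i B`; its singularity at `0` is removable because `gen` vanishes
there. -/
lemma gen_mul_reg {A B : ℝ} (hA : 0 < A) (hB : 0 < B) {u : ℂ} (hu : u ∈ rect A B) (h0 : u ≠ 0) :
    gen A B u * (2 / u + reg A B u) = 2 * deriv (gen A B) 0 := by
  have h00 := zero_mem_rect hA hB
  set h : ℂ → ℂ := fun z => 2 * dslope (gen A B) 0 z + gen A B z * reg A B z with hh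
  have hval : ∀ z, z ≠ 0 → h z = gen A B z * (2 / z + reg A B z) := by
    intro z hz
    simp only [hh]
    rw [dslope_of_ne _ hz, slope_def_field, gen_zero]
    field_simp
    ring
  have hnb : rect A B ∈ nhds (0 : ℂ) := (isOpen_rect A B).mem_nhds h00
  have hd : DifferentiableOn ℂ h (rect A B) :=
    (((Complex.differentiableOn_dslope hnb).2 (gen_differentiableOn hA hB)).const_mul 2).add
      ((gen_differentiableOn hA hB).mul
        fun z hz => (reg_differentiableAt hA hB hz).differentiableWithinAt)
  have hc := const_of_periodic hA hB hd ?_ ?_ u hu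
  · rw [← hval u h0, hc]
    simp [hh, gen_zero]
  · intro z hz hzA
    have hz1 := (abs_lt.1 hz.1).1
    have hz2 := (abs_lt.1 hzA.1).2
    have hzr : z.re < 0 := by simpa using hz2
    have hne : z ≠ 0 := by rintro rfl; simp at hzr
    have hneA : z + A ≠ 0 := by
      intro h; have := congrArg Complex.re h; simp at this; linarith
    rw [hval _ hne, hval _ hneA, ← gen_sub_eq hA hB (u := z + A) (by simp; linarith)]
    rw [show (A : ℂ) - (z + A) = -z by ring, gen_neg, gen_add_real hA hB hz hzr]
    ring
  · intro z hz hzB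
    have hz1 := (abs_lt.1 hz.2).1
    have hz2 := (abs_lt.1 hzB.2).2
    have hzr : z.im < 0 := by simpa using hz2
    have hne : z ≠ 0 := by rintro rfl; simp at hzr
    have hneB : z + B * Complex.I ≠ 0 := by
      intro h; have := congrArg Complex.im h; simp at this; linarith
    rw [hval _ hne, hval _ hneB, reg_lower hA hB hz hzr,
      reg_upper hA hB hzB (by simp; linarith), add_sub_cancel_right]
    ring

lemma gen_mul_gen_add {A B : ℝ} (hA : 0 < A) (hB : 0 < B) {u : ℂ} (hu : u ∈ rect A B)
    (hr : u.re < 0) : gen A B (u + A) * gen A B u = -(2 * deriv (gen A B) 0) := by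
  rw [gen_add_real hA hB hu hr, ← gen_mul_reg hA hB hu (by rintro rfl; simp at hr)]
  ring

lemma gen_mul_gen_add_I {A B : ℝ} (hA : 0 < A) (hB : 0 < B) {u : ℂ} (hu : u ∈ rect A B)
    (hr : u.im < 0) : gen A B (u + B * Complex.I) * gen A B u = 2 * deriv (gen A B) 0 := by
  rw [← reg_lower hA hB hu hr, ← gen_mul_reg hA hB hu (by rintro rfl; simp at hr)]
  ring

/-! ### The differential equation -/

lemma integral_mul_phi_pos {A B : ℝ} (hA : 0 < A) (hB : 0 < B) :
    0 < ∫ t in Set.Ioi (0 : ℝ), t * phi A B t := by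
  obtain ⟨C, hC⟩ := phi_bound hA hB
  have hi : IntegrableOn (fun t => t * phi A B t) (Set.Ioi 0) := by
    refine Integrable.mono' ((mul_exp_integral_le hA).1.const_mul C)
      (measurable_id.mul (phi_measurable A B)).aestronglyMeasurable ?_
    filter_upwards [ae_restrict_mem measurableSet_Ioi] with t ht
    have ht : 0 < t := ht
    rw [norm_mul, Real.norm_eq_abs, abs_of_pos ht, Real.norm_eq_abs]
    calc t * |phi A B t| ≤ t * (C * Real.exp (-A * t)) := by gcongr; exact hC t ht
      _ = _ := by ring
  have hpos : ∀ t ∈ Set.Ioi (0 : ℝ), 0 < t * phi A B t := fun t ht =>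
    mul_pos ht (phi_pos hA hB (le_of_lt ht))
  rw [setIntegral_pos_iff_support_of_nonneg_ae
    (by filter_upwards [ae_restrict_mem measurableSet_Ioi] with t ht using (hpos t ht).le) hi]
  have : Function.support (fun t => t * phi A B t) ∩ Set.Ioi 0 = Set.Ioi 0 :=
    Set.inter_eq_right.2 fun t ht => (hpos t ht).ne'
  rw [this]
  simp

lemma lapDeriv_zero (f : ℝ → ℝ) :
    lapDeriv f 0 = ((∫ t in Set.Ioi (0 : ℝ), t * f t : ℝ) : ℂ) := by
  rw [lapDeriv, ← integral_complex_ofReal]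
  simp

/-- The constant `c = gen' 0`, as a sum of integrals that makes it visibly real and positive. -/
noncomputable def slope0 (A B : ℝ) : ℝ :=
  2 * (∫ t in Set.Ioi (0 : ℝ), t * phi A B t) + 2 * ∫ t in Set.Ioi (0 : ℝ), t * phi B A t

lemma slope0_pos {A B : ℝ} (hA : 0 < A) (hB : 0 < B) : 0 < slope0 A B := by
  have := integral_mul_phi_pos hA hB
  have := integral_mul_phi_pos hB hA
  unfold slope0; linarith

lemma slope0_comm (A B : ℝ) : slope0 A B = slope0 B A := by unfold slope0; ring

lemma deriv_gen_zero {A B : ℝ} (hA : 0 < A) (hB : 0 < B) :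
    deriv (gen A B) 0 = (slope0 A B : ℂ) := by
  rw [(gen_hasDerivAt hA hB (zero_mem_rect hA hB)).deriv]
  simp only [genDeriv, sinhLapDeriv, mul_zero, neg_zero, lapDeriv_zero, slope0]
  push_cast; ring

lemma gen_ne_zero {A B : ℝ} (hA : 0 < A) (hB : 0 < B) {u : ℂ} (hu : u ∈ rect A B) (h0 : u ≠ 0) :
    gen A B u ≠ 0 := by
  intro h
  have := gen_mul_reg hA hB hu h0
  rw [h, zero_mul, deriv_gen_zero hA hB] at this
  have h2 := slope0_pos hA hB
  have h3 : (0 : ℂ) = ((2 * slope0 A B : ℝ) : ℂ) := by push_cast; exact this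
  have h4 : (0 : ℝ) = 2 * slope0 A B := by exact_mod_cast h3
  linarith

lemma deriv_gen_neg (A B : ℝ) (u : ℂ) : deriv (gen A B) (-u) = deriv (gen A B) u := by
  have h1 : (fun z => gen A B (-z)) = fun z => -gen A B z := by ext z; exact gen_neg A B z
  have h2 : deriv (fun z => gen A B (-z)) u = -deriv (gen A B) (-u) := deriv_comp_neg _ _
  have h3 : deriv (fun z => -gen A B z) u = -deriv (gen A B) u := by simp
  rw [h1, h3] at h2
  exact (neg_injective h2).symm

/-- The quotient `(g'² - g⁴ / 4 - c²) / g²` is unchanged when `g` is replaced by `±2 c / g`; here this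
is applied to a shift of the argument that turns `g` into `q / g` with `q = ±2 c`. -/
lemma quotient_shift {g : ℂ → ℂ} {u s q c : ℂ} (hg : DifferentiableAt ℂ g u) (hu : g u ≠ 0)
    (hq0 : q ≠ 0) (hq : q ^ 2 = 4 * c ^ 2) (h : ∀ᶠ z in nhds u, g (z + s) * g z = q) :
    (deriv g (u + s) ^ 2 - g (u + s) ^ 4 / 4 - c ^ 2) / g (u + s) ^ 2
      = (deriv g u ^ 2 - g u ^ 4 / 4 - c ^ 2) / g u ^ 2 := by
  have hne : ∀ᶠ z in nhds u, g z ≠ 0 := hg.continuousAt.eventually_ne hu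
  have he : (fun z => g (z + s)) =ᶠ[nhds u] fun z => q / g z := by
    filter_upwards [h, hne] with z h1 h2
    rw [eq_div_iff h2, h1]
  have hd : deriv g (u + s) = -(q * deriv g u) / g u ^ 2 := by
    rw [← deriv_comp_add_const, he.deriv_eq, deriv_fun_div (differentiableAt_const _) hg hu]
    simp
  have hv : g (u + s) = q / g u := he.eq_of_nhds
  have hc : c ^ 2 = q ^ 2 / 4 := by rw [hq]; ring
  rw [hd, hv, hc]
  field_simp
  ring

/-- By the reflection formulas and `quotient_shift` the quotient `(gen'² - gen⁴ / 4 - c²) / gen²` has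
periods `A` and `i B`.  Its numerator is even and vanishes at `0`, hence vanishes there to second
order, so the quotient is holomorphic on the rectangle and therefore constant. -/
theorem gen_ode {A B : ℝ} (hA : 0 < A) (hB : 0 < B) :
    ∃ D : ℂ, ∀ u ∈ rect A B, deriv (gen A B) u ^ 2
      = gen A B u ^ 4 / 4 + D * gen A B u ^ 2 + (slope0 A B : ℂ) ^ 2 := by
  have h00 := zero_mem_rect hA hB
  have hopen := isOpen_rect A B
  have hnb : rect A B ∈ nhds (0 : ℂ) := hopen.mem_nhds h00
  set c : ℂ := (slope0 A B : ℂ) with hc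
  have hc0 : c ≠ 0 := by rw [hc]; exact_mod_cast (slope0_pos hA hB).ne'
  have hcd := deriv_gen_zero hA hB
  have hgd := gen_differentiableOn hA hB
  set N : ℂ → ℂ := fun z => deriv (gen A B) z ^ 2 - gen A B z ^ 4 / 4 - c ^ 2 with hN
  have hNd : DifferentiableOn ℂ N (rect A B) :=
    (((hgd.deriv hopen).pow 2).sub ((hgd.pow 4).div_const 4)).sub_const _
  have hN0 : N 0 = 0 := by simp [hN, gen_zero, hcd, hc]
  have hNe : ∀ z, N (-z) = N z := by
    intro z; simp only [hN, deriv_gen_neg, gen_neg]; ring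
  have hN1 : deriv N 0 = 0 := by
    have h1 : deriv (fun z => N (-z)) 0 = -deriv N (-0) := deriv_comp_neg _ _
    rw [funext hNe, neg_zero] at h1
    linear_combination h1 / 2
  set h : ℂ → ℂ := fun z => dslope (dslope N 0) 0 z / dslope (gen A B) 0 z ^ 2 with hh
  have hval : ∀ z, z ≠ 0 → h z = N z / gen A B z ^ 2 := by
    intro z hz
    simp only [hh]
    rw [dslope_of_ne _ hz, slope_def_field, dslope_same, hN1, dslope_of_ne _ hz, slope_def_field,
      dslope_of_ne _ hz, slope_def_field, hN0, gen_zero]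
    field_simp
    ring
  have hden : ∀ z ∈ rect A B, dslope (gen A B) 0 z ≠ 0 := by
    intro z hz
    by_cases h0 : z = 0
    · rw [h0, dslope_same, hcd]; exact hc0
    · rw [dslope_of_ne _ h0, slope_def_field, gen_zero, sub_zero, sub_zero]
      exact div_ne_zero (gen_ne_zero hA hB hz h0) h0
  have hd : DifferentiableOn ℂ h (rect A B) := by
    refine DifferentiableOn.div ?_ (((Complex.differentiableOn_dslope hnb).2 hgd).pow 2)
      fun z hz => pow_ne_zero 2 (hden z hz)
    exact (Complex.differentiableOn_dslope hnb).2 ((Complex.differentiableOn_dslope hnb).2 hNd)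
  have hconst := const_of_periodic hA hB hd ?_ ?_
  · refine ⟨h 0, fun u hu => ?_⟩
    by_cases h0 : u = 0
    · rw [h0, gen_zero, hcd]; ring
    · have e := hconst u hu
      rw [hval u h0, div_eq_iff (pow_ne_zero 2 (gen_ne_zero hA hB hu h0))] at e
      simp only [hN] at e
      linear_combination e
  · intro z hz hzA
    have hz1 := (abs_lt.1 hz.1).1
    have hz2 := (abs_lt.1 hzA.1).2
    have hzr : z.re < 0 := by simpa using hz2
    have hne : z ≠ 0 := by rintro rfl; simp at hzr
    have hneA : z + A ≠ 0 := by
      intro h; have := congrArg Complex.re h; simp at this; linarith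
    rw [hval _ hne, hval _ hneA]
    refine quotient_shift (q := -(2 * c)) (gen_hasDerivAt hA hB hz).differentiableAt
      (gen_ne_zero hA hB hz hne) (by simpa using hc0) (by ring) ?_
    filter_upwards [hopen.mem_nhds hz,
      (isOpen_lt Complex.continuous_re continuous_const).mem_nhds hzr] with y hy hneg
    rw [gen_mul_gen_add hA hB hy hneg, hcd]
  · intro z hz hzB
    have hz1 := (abs_lt.1 hz.2).1
    have hz2 := (abs_lt.1 hzB.2).2
    have hzr : z.im < 0 := by simpa using hz2
    have hne : z ≠ 0 := by rintro rfl; simp at hzr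
    have hneB : z + B * Complex.I ≠ 0 := by
      intro h; have := congrArg Complex.im h; simp at this; linarith
    rw [hval _ hne, hval _ hneB]
    refine quotient_shift (q := 2 * c) (gen_hasDerivAt hA hB hz).differentiableAt
      (gen_ne_zero hA hB hz hne) (by simpa using hc0) (by ring) ?_
    filter_upwards [hopen.mem_nhds hz,
      (isOpen_lt Complex.continuous_im continuous_const).mem_nhds hzr] with y hy hneg
    rw [gen_mul_gen_add_I hA hB hy hneg, hcd]

/-! ### Restriction to the real axis -/

/-- The restriction of `gen A B` to the real axis, written with real integrals. -/
noncomputable def genReal (A B x : ℝ) : ℝ :=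
  (∫ t in Set.Ioi (0 : ℝ), 2 * Real.sin (x * t) * phi B A t) +
    ∫ t in Set.Ioi (0 : ℝ), 2 * Real.sinh (x * t) * phi A B t

lemma gen_ofReal {A B : ℝ} (hA : 0 < A) (hB : 0 < B) {x : ℝ} (hx : |x| < A) :
    gen A B x = (genReal A B x : ℂ) := by
  obtain ⟨C, hC⟩ := phi_bound hA hB
  obtain ⟨C', hC'⟩ := phi_bound hB hA
  obtain ⟨h1, h2⟩ := abs_lt.1 hx
  have i1 := lap_integrable (phi_measurable A B) hC (u := x) (by simpa using h2)
  have i2 := lap_integrable (phi_measurable A B) hC (u := -x) (by simp; linarith)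
  have i3 := lap_integrable (phi_measurable B A) hC' (u := Complex.I * x) (by simpa using hB)
  have i4 := lap_integrable (phi_measurable B A) hC' (u := -(Complex.I * x)) (by simpa using hB)
  unfold gen sinhLap lap genReal
  rw [← integral_sub i1 i2, ← integral_sub i3 i4, Complex.ofReal_add, ← integral_complex_ofReal,
    ← integral_complex_ofReal, ← integral_const_mul, add_comm, sub_eq_add_neg, ← integral_neg]
  congr 1
  · congr 1
    ext t
    push_cast
    rw [Complex.sinh]
    ring_nf
  · congr 1
    ext t
    push_cast
    rw [Complex.sin]
    ring_nf

lemma ofReal_mem_rect {A B : ℝ} (hB : 0 < B) {x : ℝ} (hx : |x| < A) : (x : ℂ) ∈ rect A B := by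
  simp [rect, hx, hB]

/-- The differential equation on the real and on the imaginary axis; `gen A B (i x) = i gen B A x`
accounts for the change of sign of `D`. -/
lemma genReal_facts {A B : ℝ} (hA : 0 < A) (hB : 0 < B) :
    ∃ (D : ℝ) (g1 g2 : ℝ → ℝ),
      (∀ x, |x| < A → HasDerivAt (genReal A B) (g1 x) x ∧
        g1 x ^ 2 = genReal A B x ^ 4 / 4 + D * genReal A B x ^ 2 + slope0 A B ^ 2) ∧
      (∀ x, |x| < B → HasDerivAt (genReal B A) (g2 x) x ∧
        g2 x ^ 2 = genReal B A x ^ 4 / 4 - D * genReal B A x ^ 2 + slope0 A B ^ 2) := by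
  have hderiv : ∀ {A B : ℝ}, 0 < A → 0 < B → ∀ x : ℝ, |x| < A →
      HasDerivAt (genReal A B) (deriv (gen A B) x).re x ∧
      deriv (gen A B) x = ((deriv (gen A B) x).re : ℂ) := by
    intro A B hA hB x hx
    have hg := (gen_hasDerivAt hA hB (ofReal_mem_rect hB hx)).differentiableAt.hasDerivAt
    have hnear : ∀ᶠ y : ℝ in nhds x, |y| < A :=
      (isOpen_lt continuous_abs continuous_const).mem_nhds hx
    have h1 : HasDerivAt (genReal A B) (deriv (gen A B) x).re x := by
      refine hg.real_of_complex.congr_of_eventuallyEq ?_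
      filter_upwards [hnear] with y hy
      rw [gen_ofReal hA hB hy, Complex.ofReal_re]
    refine ⟨h1, ?_⟩
    have h2 : HasDerivAt (fun y : ℝ => gen A B y) (deriv (gen A B) x) x := hg.comp_ofReal
    have h3 : HasDerivAt (fun y : ℝ => gen A B y) (((deriv (gen A B) x).re : ℝ) : ℂ) x := by
      refine h1.ofReal_comp.congr_of_eventuallyEq ?_
      filter_upwards [hnear] with y hy
      rw [gen_ofReal hA hB hy]
    exact h2.unique h3
  obtain ⟨D, hD⟩ := gen_ode hA hB
  refine ⟨D.re, fun x => (deriv (gen A B) x).re, fun x => (deriv (gen B A) x).re, ?_, ?_⟩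
  · intro x hx
    obtain ⟨h1, h2⟩ := hderiv hA hB x hx
    refine ⟨h1, ?_⟩
    have h3 := hD x (ofReal_mem_rect hB hx)
    rw [h2, gen_ofReal hA hB hx] at h3
    have h4 := congrArg Complex.re h3
    norm_cast at h4
    rw [Complex.add_re, Complex.add_re, Complex.re_mul_ofReal, Complex.ofReal_re, Complex.ofReal_re]
      at h4
    exact h4
  · intro x hx
    obtain ⟨h1, h2⟩ := hderiv hB hA x hx
    refine ⟨h1, ?_⟩
    have h3 := hD (Complex.I * x) (by simp [rect, hx, hA])
    have h5 : deriv (gen A B) (Complex.I * x) = deriv (gen B A) x := by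
      have e : gen B A = fun z => -Complex.I * gen A B (Complex.I * z) := by
        ext z
        rw [gen_I_mul]
        linear_combination (gen B A z) * Complex.I_sq
      have hh : HasDerivAt (gen A B) (deriv (gen A B) (Complex.I * x)) (Complex.I * x) :=
        (gen_hasDerivAt hA hB (by simp [rect, hx, hA])).differentiableAt.hasDerivAt
      have hI : HasDerivAt (fun z : ℂ => Complex.I * z) Complex.I (x : ℂ) := by
        simpa using (hasDerivAt_id (x : ℂ)).const_mul Complex.I
      have := ((hh.scomp (x : ℂ) hI).const_mul (-Complex.I)).deriv
      have e2 : deriv (gen B A) x = -Complex.I * Complex.I • deriv (gen A B) (Complex.I * x) := by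
        rw [← this, e]; rfl
      rw [e2, smul_eq_mul]
      linear_combination (deriv (gen A B) (Complex.I * x)) * Complex.I_sq
    rw [h5, h2, gen_I_mul, gen_ofReal hB hA hx, mul_pow, mul_pow, Complex.I_sq, Complex.I_pow_four]
      at h3
    have h4 := congrArg Complex.re h3
    rw [one_mul, neg_one_mul] at h4
    norm_cast at h4
    rw [Complex.add_re, Complex.add_re, Complex.re_mul_ofReal, Complex.ofReal_re, Complex.ofReal_re]
      at h4
    beta_reduce
    linarith

lemma genReal_zero (A B : ℝ) : genReal A B 0 = 0 := by simp [genReal]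

lemma genReal_mul {A B : ℝ} (hA : 0 < A) (hB : 0 < B) {x : ℝ} (h0 : 0 < x) (h1 : x < A) :
    genReal A B x * genReal A B (A - x) = 2 * slope0 A B := by
  have h := gen_mul_gen_add hA hB (u := -(x : ℂ))
    (by simp [rect, hB, abs_of_pos h0, h1]) (by simpa using h0)
  rw [gen_neg, deriv_gen_zero hA hB, neg_add_eq_sub, ← Complex.ofReal_sub,
    gen_ofReal hA hB (by rw [abs_of_pos] <;> linarith),
    gen_ofReal hA hB (by rw [abs_of_pos] <;> linarith)] at h
  norm_cast at h
  linarith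

lemma genReal_hasDerivAt_zero {A B : ℝ} (hA : 0 < A) (hB : 0 < B) :
    HasDerivAt (genReal A B) (slope0 A B) 0 := by
  have hg := (gen_hasDerivAt hA hB (zero_mem_rect hA hB)).differentiableAt.hasDerivAt
  rw [deriv_gen_zero hA hB] at hg
  have hg' : HasDerivAt (gen A B) (slope0 A B : ℂ) ((0 : ℝ) : ℂ) := by simpa using hg
  have := hg'.real_of_complex
  rw [Complex.ofReal_re] at this
  refine this.congr_of_eventuallyEq ?_
  have hnear : ∀ᶠ y : ℝ in nhds 0, |y| < A :=
    (isOpen_lt continuous_abs continuous_const).mem_nhds (by simpa using hA)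
  filter_upwards [hnear] with y hy
  rw [gen_ofReal hA hB hy, Complex.ofReal_re]

/-! ### The complete elliptic integral -/

lemma ellipticK_base_pos {k : ℝ} (hk0 : 0 ≤ k) (hk1 : k < 1) (θ : ℝ) :
    0 < 1 - k ^ 2 * Real.sin θ ^ 2 := by
  have h1 := Real.sin_sq_le_one θ
  have h2 := sq_nonneg (Real.sin θ)
  nlinarith

lemma ellipticK_continuous {k : ℝ} (hk0 : 0 ≤ k) (hk1 : k < 1) :
    Continuous fun θ : ℝ => (1 - k ^ 2 * Real.sin θ ^ 2) ^ (-(1 / 2) : ℝ) :=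
  Continuous.rpow_const (by fun_prop) fun θ => Or.inl (ellipticK_base_pos hk0 hk1 θ).ne'

lemma ellipticK_pos {k : ℝ} (hk0 : 0 ≤ k) (hk1 : k < 1) : 0 < ellipticK k :=
  intervalIntegral.intervalIntegral_pos_of_pos
    ((ellipticK_continuous hk0 hk1).intervalIntegrable _ _)
    (fun θ => Real.rpow_pos_of_pos (ellipticK_base_pos hk0 hk1 θ) _) (by positivity)

lemma ellipticK_lt {k l : ℝ} (hk0 : 0 ≤ k) (hkl : k < l) (hl1 : l < 1) :
    ellipticK k < ellipticK l := by
  have hl0 : 0 ≤ l := hk0.trans hkl.le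
  refine intervalIntegral.integral_lt_integral_of_continuousOn_of_le_of_exists_lt (by positivity)
    (ellipticK_continuous hk0 (hkl.trans hl1)).continuousOn
    (ellipticK_continuous hl0 hl1).continuousOn ?_ ⟨π / 2, ⟨by positivity, le_rfl⟩, ?_⟩
  · intro θ _
    refine Real.rpow_le_rpow_of_nonpos (ellipticK_base_pos hl0 hl1 θ) ?_ (by norm_num)
    gcongr
  · refine Real.rpow_lt_rpow_of_neg (ellipticK_base_pos hl0 hl1 _) ?_ (by norm_num)
    rw [Real.sin_pi_div_two]
    nlinarith

/-! ### The real differential equation -/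

/-- The reflection `j x * j (A - x) = 2 c` gives `j (A / 2) ^ 2 = 2 c`, so that
`g (A / 2) ^ 2 = 2 c (D + c)` and `-c ≤ D`.  If `D = -c`, then `y = j ^ 2 / 2 - c` satisfies
`|y'| = |j| |y|` and vanishes at `A / 2`, hence on `[0, A / 2]`, against `y 0 = -c`. -/
lemma neg_lt_of_ode {A c D : ℝ} {j g : ℝ → ℝ} (hA : 0 < A) (hc : 0 < c) (hj0 : j 0 = 0)
    (hj : ∀ x, |x| < A → HasDerivAt j (g x) x ∧ g x ^ 2 = j x ^ 4 / 4 + D * j x ^ 2 + c ^ 2)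
    (hm : ∀ x, 0 < x → x < A → j x * j (A - x) = 2 * c) : -c < D := by
  have hh : j (A / 2) ^ 2 = 2 * c := by
    have := hm (A / 2) (by linarith) (by linarith)
    rw [sub_half] at this
    linarith
  have hlt : |A / 2| < A := by rw [abs_of_pos] <;> linarith
  have h1 := (hj _ hlt).2
  rw [show j (A / 2) ^ 4 = (j (A / 2) ^ 2) ^ 2 by ring, hh] at h1
  have h2 : 0 ≤ 2 * c * (D + c) := by nlinarith [sq_nonneg (g (A / 2))]
  have h3 : 0 ≤ D + c := by
    by_contra hneg
    have := mul_neg_of_pos_of_neg (show (0 : ℝ) < 2 * c by linarith) (not_le.1 hneg)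
    linarith
  refine lt_of_le_of_ne (by linarith) fun hD => ?_
  have hab : ∀ x ∈ Set.Icc 0 (A / 2), |A / 2 - x| < A := fun x hx => by
    rw [abs_of_nonneg (by linarith [hx.2])]; linarith [hx.1]
  have hjd : ∀ x ∈ Set.Icc 0 (A / 2),
      HasDerivAt (fun x => j (A / 2 - x)) (-g (A / 2 - x)) x := fun x hx => by
    have := (hj _ (hab x hx)).1.comp_const_sub (A / 2) x
    simpa using this
  have hjc : ContinuousOn (fun x => j (A / 2 - x)) (Set.Icc 0 (A / 2)) := fun x hx =>
    (hjd x hx).continuousAt.continuousWithinAt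
  obtain ⟨M, hM⟩ := isCompact_Icc.exists_bound_of_continuousOn hjc
  have hyd : ∀ x ∈ Set.Icc 0 (A / 2), HasDerivAt (fun x => j (A / 2 - x) ^ 2 / 2 - c)
      (-(j (A / 2 - x) * g (A / 2 - x))) x := fun x hx => by
    refine ((((hjd x hx).pow 2).div_const 2).sub_const c).congr_deriv ?_
    simp; ring
  have hz := eq_zero_of_abs_deriv_le_mul_abs_self_of_eq_zero_right (K := M)
    (fun x hx => (hyd x hx).continuousAt.continuousWithinAt)
    (fun x hx => (hyd x ⟨hx.1, hx.2.le⟩).hasDerivWithinAt) (by simp [hh]) ?_ (A / 2)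
    ⟨by linarith, le_rfl⟩
  · simp [hj0] at hz
    linarith
  · intro x hx
    have hx' : x ∈ Set.Icc 0 (A / 2) := ⟨hx.1, hx.2.le⟩
    have e := (hj _ (hab x hx')).2
    have e2 : |g (A / 2 - x)| = |j (A / 2 - x) ^ 2 / 2 - c| := by
      rw [← sq_eq_sq_iff_abs_eq_abs, e, ← hD]; ring
    rw [norm_neg, norm_mul, Real.norm_eq_abs (g _), e2, Real.norm_eq_abs (_ - _)]
    have hMx := hM x hx'
    exact mul_le_mul_of_nonneg_right hMx (abs_nonneg _)

/-- In terms of `θ = 2 arctan (j / √(2c))` the equation becomes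
`θ' = √(2c) √(1 - k² sin² θ)` with `k² = (c - D) / (2c)`, and `θ` runs from `0` to `π / 2` as `x`
runs from `0` to `A / 2`. -/
lemma ellipticK_of_ode {A c D : ℝ} {j g : ℝ → ℝ} (hA : 0 < A) (hc : 0 < c) (hj0 : j 0 = 0)
    (hj : ∀ x, |x| < A → HasDerivAt j (g x) x ∧ g x ^ 2 = j x ^ 4 / 4 + D * j x ^ 2 + c ^ 2)
    (hd0 : HasDerivAt j c 0)
    (hm : ∀ x, 0 < x → x < A → j x * j (A - x) = 2 * c) (h1 : -c < D) (h2 : D < c) :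
    ellipticK √((c - D) / (2 * c)) = √(c / 2) * A := by
  have hg0 : g 0 = c := ((hj 0 (by simpa using hA)).1).unique hd0
  have hne : ∀ x ∈ Set.Ioo (-A) A, g x ≠ 0 := by
    intro x hx h0
    have e := (hj x (abs_lt.2 hx)).2
    rw [h0] at e
    have e2 : (j x ^ 2 / 2 - c) ^ 2 + (D + c) * j x ^ 2 = 0 := by linear_combination -e
    have e3 : 0 ≤ (D + c) * j x ^ 2 := mul_nonneg (by linarith) (sq_nonneg _)
    have e4 : (j x ^ 2 / 2 - c) ^ 2 = 0 := by nlinarith [sq_nonneg (j x ^ 2 / 2 - c)]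
    have e5 : (D + c) * j x ^ 2 = 0 := by linarith
    have e6 : j x ^ 2 = 0 := (mul_eq_zero.1 e5).resolve_left (by linarith)
    rw [e6] at e4
    nlinarith
  have hpos : ∀ x ∈ Set.Ioo (-A) A, 0 < g x := by
    rcases hasDerivWithinAt_forall_lt_or_forall_gt_of_forall_ne (convex_Ioo (-A) A)
      (fun x hx => (hj x (abs_lt.2 hx)).1.hasDerivWithinAt) hne with h | h
    · have := h 0 ⟨by linarith, hA⟩
      linarith
    · exact h
  have hmono : StrictMonoOn j (Set.Ioo (-A) A) :=
    strictMonoOn_of_hasDerivWithinAt_pos (convex_Ioo _ _)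
      (fun x hx => (hj x (abs_lt.2 hx)).1.continuousAt.continuousWithinAt)
      (fun x hx => (hj x (abs_lt.2 (Set.mem_Ioo.1 (interior_subset hx)))).1.hasDerivWithinAt)
      (fun x hx => hpos x (interior_subset hx))
  set s := √(2 * c) with hs
  have hs2 : s ^ 2 = 2 * c := Real.sq_sqrt (by linarith)
  have hs0 : 0 < s := Real.sqrt_pos.2 (by linarith)
  have hhalf : j (A / 2) = s := by
    have hp : 0 < j (A / 2) := by
      rw [← hj0]
      exact hmono ⟨by linarith, hA⟩ ⟨by linarith, by linarith⟩ (by linarith)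
    have := hm (A / 2) (by linarith) (by linarith)
    rw [sub_half] at this
    nlinarith
  set k := √((c - D) / (2 * c)) with hk
  have hk2 : k ^ 2 = (c - D) / (2 * c) := Real.sq_sqrt (by apply div_nonneg <;> linarith)
  have hk0 : 0 ≤ k := Real.sqrt_nonneg _
  have hk1 : k < 1 := by
    rw [hk, Real.sqrt_lt' one_pos, div_lt_iff₀ (by linarith)]; linarith
  have hcont := ellipticK_continuous hk0 hk1
  set f : ℝ → ℝ := fun θ => (1 - k ^ 2 * Real.sin θ ^ 2) ^ (-(1 / 2) : ℝ) with hf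
  set F : ℝ → ℝ := fun y => ∫ θ in (0 : ℝ)..y, f θ with hF
  have hFd : ∀ y, HasDerivAt F (f y) y := fun y => hcont.integral_hasStrictDerivAt 0 y |>.hasDerivAt
  have hmain : ∀ x ∈ Set.uIcc 0 (A / 2),
      HasDerivAt (fun x => F (2 * Real.arctan (j x / s))) s x := by
    intro x hx
    rw [Set.uIcc_of_le (by linarith)] at hx
    have hxA : x ∈ Set.Ioo (-A) A := ⟨by linarith [hx.1], by linarith [hx.2]⟩
    obtain ⟨hjx, he⟩ := hj x (abs_lt.2 hxA)
    have hgx := hpos x hxA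
    have hq : 0 < s ^ 2 + j x ^ 2 := by positivity
    have hsin : Real.sin (2 * Real.arctan (j x / s)) = 2 * j x * s / (s ^ 2 + j x ^ 2) := by
      rw [Real.sin_two_mul, Real.sin_arctan, Real.cos_arctan]
      have hw : 0 < 1 + (j x / s) ^ 2 := by positivity
      have hw2 := Real.sq_sqrt hw.le
      have hw0 := Real.sqrt_pos.2 hw
      rw [show 2 * (j x / s / √(1 + (j x / s) ^ 2)) * (1 / √(1 + (j x / s) ^ 2))
        = 2 * (j x / s) / √(1 + (j x / s) ^ 2) ^ 2 by field_simp, hw2]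
      field_simp
    have hfx : f (2 * Real.arctan (j x / s)) = (s ^ 2 + j x ^ 2) / (2 * g x) := by
      have hb : 1 - k ^ 2 * Real.sin (2 * Real.arctan (j x / s)) ^ 2
          = (2 * g x / (s ^ 2 + j x ^ 2)) ^ 2 := by
        rw [hsin, hk2, div_pow, div_pow, mul_pow, mul_pow, mul_pow, he]
        rw [hs2] at hq ⊢
        field_simp
        ring
      simp only [hf]
      rw [hb, Real.rpow_neg (by positivity), ← Real.sqrt_eq_rpow, Real.sqrt_sq (by positivity),
        inv_div]
    have hθ := ((hjx.div_const s).arctan).const_mul 2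
    refine ((hFd _).comp x hθ).congr_deriv ?_
    rw [hfx]
    field_simp
  have hint := intervalIntegral.integral_eq_sub_of_hasDerivAt hmain (by simp)
  rw [intervalIntegral.integral_const, hhalf, hj0, div_self hs0.ne', Real.arctan_one, zero_div,
    Real.arctan_zero, mul_zero, show 2 * (π / 4) = π / 2 by ring] at hint
  have hF0 : F 0 = 0 := by simp [hF]
  have hFK : F (π / 2) = ellipticK k := rfl
  rw [hF0, hFK, sub_zero, sub_zero, smul_eq_mul] at hint
  rw [← hint]
  have hsc : √(c / 2) = s / 2 := by
    rw [Real.sqrt_eq_iff_mul_self_eq (by linarith) (by linarith)]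
    linear_combination -hs2 / 4
  rw [hsc]; ring

/-! ### Conclusion -/

/-- The substitution `x = t ^ 2`. -/
lemma integral_sqrt_div_sqrt (h q : ℝ → ℝ) :
    ∫ x in Set.Ioi (0 : ℝ), h √x / (√x * q √x)
      = ∫ t in Set.Ioi (0 : ℝ), 2 * h t * (1 / q t) := by
  rw [← integral_comp_rpow_Ioi_of_pos (p := 2) two_pos]
  refine setIntegral_congr_fun measurableSet_Ioi fun t ht => ?_
  have ht : 0 < t := ht
  have e : √(t ^ (2 : ℝ)) = t := by
    rw [Real.rpow_two, Real.sqrt_sq ht.le]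
  have e2 : t ^ ((2 : ℝ) - 1) = t := by norm_num
  simp only [e, e2, smul_eq_mul]
  by_cases hq : q t = 0
  · simp [hq]
  · field_simp

lemma Jgen_eq_genReal (k u : ℝ) :
    Jgen k u = genReal (ellipticK k) (ellipticK √(1 - k ^ 2)) u := by
  unfold Jgen genReal phi
  rw [integral_sqrt_div_sqrt (fun t => Real.sin (u * t)) (fun t => Real.cos (ellipticK k * t) +
        Real.cosh (ellipticK √(1 - k ^ 2) * t)),
    integral_sqrt_div_sqrt (fun t => Real.sinh (u * t)) (fun t => Real.cosh (ellipticK k * t) +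
        Real.cos (ellipticK √(1 - k ^ 2) * t))]
  simp only [add_comm (Real.cos _)]

/-- The modulus `k₀` produced by the differential equation has `K(k₀) = r A` and `K(k₀') = r B` with
`r = √(c / 2)`.  As `K` is strictly increasing, `k₀ ≠ k` would force `r < 1` and `r > 1` at once. -/
lemma slope0_ellipticK {k : ℝ} (hk : k ∈ Set.Ioo (0 : ℝ) 1) :
    slope0 (ellipticK k) (ellipticK √(1 - k ^ 2)) = 2 := by
  obtain ⟨hk0, hk1⟩ := hk
  have hk'0 : 0 < √(1 - k ^ 2) := Real.sqrt_pos.2 (by nlinarith)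
  have hk'1 : √(1 - k ^ 2) < 1 := by rw [Real.sqrt_lt' one_pos]; nlinarith
  have hA := ellipticK_pos hk0.le hk1
  have hB := ellipticK_pos hk'0.le hk'1
  have hc := slope0_pos hA hB
  obtain ⟨D, g1, g2, hg1, hg2⟩ := genReal_facts hA hB
  have hm1 := fun x (h0 : 0 < x) h1 => genReal_mul hA hB h0 h1
  have hm2 := fun x (h0 : 0 < x) h1 => genReal_mul hB hA h0 h1
  have hd1 := genReal_hasDerivAt_zero hA hB
  have hd2 := genReal_hasDerivAt_zero hB hA
  rw [slope0_comm] at hd2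
  simp only [slope0_comm (ellipticK √(1 - k ^ 2))] at hm2
  set A := ellipticK k with hAdef
  set B := ellipticK √(1 - k ^ 2) with hBdef
  set c := slope0 A B
  have hg2' : ∀ x, |x| < B → HasDerivAt (genReal B A) (g2 x) x ∧
      g2 x ^ 2 = genReal B A x ^ 4 / 4 + (-D) * genReal B A x ^ 2 + c ^ 2 := fun x hx =>
    ⟨(hg2 x hx).1, by rw [(hg2 x hx).2]; ring⟩
  have hD1 := neg_lt_of_ode hA hc (genReal_zero A B) hg1 hm1
  have hD2 := neg_lt_of_ode hB hc (genReal_zero B A) hg2' hm2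
  have hE1 := ellipticK_of_ode hA hc (genReal_zero A B) hg1 hd1 hm1 hD1 (by linarith)
  have hE2 := ellipticK_of_ode hB hc (genReal_zero B A) hg2' hd2 hm2 (by linarith) (by linarith)
  have hk0sq : √((c - D) / (2 * c)) ^ 2 = (c - D) / (2 * c) :=
    Real.sq_sqrt (by apply div_nonneg <;> linarith)
  have hcompl : (c - -D) / (2 * c) = 1 - √((c - D) / (2 * c)) ^ 2 := by
    rw [hk0sq]; field_simp; ring
  rw [hcompl] at hE2
  have hl1 : √((c - D) / (2 * c)) < 1 := by
    rw [Real.sqrt_lt' one_pos, div_lt_iff₀ (by linarith)]; linarith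
  have hl0 : 0 < √((c - D) / (2 * c)) := Real.sqrt_pos.2 (by apply div_pos <;> linarith)
  set l := √((c - D) / (2 * c))
  have hl'1 : √(1 - l ^ 2) < 1 := by rw [Real.sqrt_lt' one_pos]; nlinarith
  have hr : √(c / 2) = 1 := by
    rcases lt_trichotomy l k with h | h | h
    · have i1 := ellipticK_lt hl0.le h hk1
      have i2 := ellipticK_lt hk'0.le
        (Real.sqrt_lt_sqrt (by nlinarith) (by nlinarith : 1 - k ^ 2 < 1 - l ^ 2)) hl'1
      rw [hE1] at i1
      rw [hE2] at i2
      nlinarith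
    · rw [h] at hE1
      have : √(c / 2) * A = 1 * A := by rw [← hE1, one_mul]
      exact mul_right_cancel₀ hA.ne' this
    · have i1 := ellipticK_lt hk0.le h hl1
      have i2 := ellipticK_lt (Real.sqrt_nonneg (1 - l ^ 2))
        (Real.sqrt_lt_sqrt (by nlinarith) (by nlinarith : 1 - l ^ 2 < 1 - k ^ 2)) hk'1
      rw [hE1] at i1
      rw [hE2] at i2
      nlinarith
  rw [Real.sqrt_eq_one] at hr
  linarith

theorem Jgen_mul_Jgen_reflection (k : ℝ) (hk : k ∈ Set.Ioo (0 : ℝ) 1) :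
    ∀ u : ℝ, 0 < u → u < ellipticK k → Jgen k u * Jgen k (ellipticK k - u) = 4 := by
  intro u h0 h1
  have hk' : √(1 - k ^ 2) < 1 := by
    rw [Real.sqrt_lt' one_pos]; nlinarith [hk.1]
  rw [Jgen_eq_genReal, Jgen_eq_genReal,
    genReal_mul (ellipticK_pos hk.1.le hk.2) (ellipticK_pos (Real.sqrt_nonneg _) hk') h0 h1,
    slope0_ellipticK hk]
  norm_num
end

section
/- Let k ∈ (0,1). For every n ∈ ℕ, Kuznetsov's moment integrals satisfy the binomial convolution identity I_n^− = −4 Σ_{p=0}^{n} C(2n+1, 2p+1) I_p^+ I_{n−p}^+, where C(a,b) denotes the binomial coefficient. -/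
/-!
Let `a` be the elliptic integral of `k`, `b` the complementary one, `w = (a + bi)/2` and `v = w̄`. The
identity holds for all positive `a, b`; that they are elliptic integrals is used only for their
positivity.

**From integrals to lattice sums.** After `x = t²` the denominators factor:
`cosh (bt) - σ cos (at)` is half of the product of the two functions `e^{pt} - σ e^{-pt}` with
`p = -iw` and `p = iv`, and the second integral has `p = w, v` instead. Here `σ = -1` for `I^+` and
`σ = 1` for `I^-`. Expanding both factors in geometric series and integrating term by term
(`hasSum_inner`, `hasSum_outer`) gives sums over quadrants of powers of `(2l+1)w + (2m+1)v`; the two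
integrals together give the sum over the half-plane `l ≥ 0`, `m ∈ ℤ` (`hasSum_pair`).

**From lattice sums to Lambert series.** The inner sum over `m ∈ ℤ` is evaluated by the Lipschitz
formula, alternating for `σ = -1` (`hasSum_lipschitz`, `hasSum_lipschitz_alt`), and the sum over `l`
is then geometric (`tsum_geom_swap`). With `y = exp (πiw/(2v))`, `|y| < 1`, this shows
`I_N^+ = -2i (π/(2v))^(2N+2) A_{2N+1}`, where
`A_m = ∑_{r ∈ ℤ} (-1)^r (2r+1)^m / (y^{-(2r+1)} + y^{2r+1})`, and
`I_n^- = -4 (π/v)^(2n+4) ∑_{j ≥ 0} (-1)^j j^(2n+3) / (y^{-2j} - y^{2j})`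
(`Iplus_eq`, `Iminus_eq`).

**The convolution.** By the addition formula for the hyperbolic tangent, the product
`1 / (cosh (2r+1) cosh (2s+1))` summed over the antidiagonal `r + s + 1 = N` telescopes to a multiple
of `N / sinh (2N)` (`hasSum_conv`). Since `A_m = 0` for even `m`, the binomial theorem and the
symmetry in `r, s` turn the convolution of the odd `A_m` into the series for `I_n^-`
(`Aq_convolution`).
-/

open MeasureTheory Real

/-! ### Termwise integration of geometric expansions -/

lemma integrableOn_pow_mul_exp (n : ℕ) {b : ℝ} (hb : 0 < b) :
    IntegrableOn (fun t : ℝ => t ^ n * Real.exp (-(b * t))) (Set.Ioi 0) := by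
  have h := integrableOn_rpow_mul_exp_neg_mul_rpow (p := 1) (s := n) (b := b)
    (by have : (0 : ℝ) ≤ n := n.cast_nonneg
        linarith) one_pos hb
  simpa using h

lemma integral_pow_mul_exp (n : ℕ) {b : ℝ} (hb : 0 < b) :
    ∫ t in Set.Ioi (0 : ℝ), t ^ n * Real.exp (-(b * t)) = n.factorial / b ^ (n + 1) := by
  have h := Real.integral_rpow_mul_exp_neg_mul_Ioi (a := (n : ℝ) + 1) (r := b) (by positivity) hb
  rw [Real.Gamma_nat_eq_factorial] at h
  simp only [add_sub_cancel_right, Real.rpow_natCast] at h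
  rw [h]
  rw [show ((n : ℝ) + 1) = ((n + 1 : ℕ) : ℝ) by push_cast; ring, Real.rpow_natCast]
  rw [one_div, inv_pow, div_eq_inv_mul]

lemma norm_pow_mul_cexp (n : ℕ) (c : ℂ) {t : ℝ} (ht : 0 < t) :
    ‖(t : ℂ) ^ n * Complex.exp (-(c * t))‖ = t ^ n * Real.exp (-(c.re * t)) := by
  simp [Complex.norm_exp, abs_of_pos ht]

lemma integrableOn_pow_mul_cexp (n : ℕ) {c : ℂ} (hc : 0 < c.re) :
    IntegrableOn (fun t : ℝ => (t : ℂ) ^ n * Complex.exp (-(c * t))) (Set.Ioi 0) := by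
  refine Integrable.mono' (integrableOn_pow_mul_exp n hc) ?_ ?_
  · exact (by fun_prop : Continuous fun t : ℝ =>
      (t : ℂ) ^ n * Complex.exp (-(c * t))).aestronglyMeasurable
  · filter_upwards [ae_restrict_mem measurableSet_Ioi] with t ht
    exact (norm_pow_mul_cexp n c ht).le

lemma tendsto_pow_mul_cexp (n : ℕ) {c : ℂ} (hc : 0 < c.re) :
    Filter.Tendsto (fun t : ℝ => (t : ℂ) ^ n * Complex.exp (-(c * t))) Filter.atTop (nhds 0) := by
  rw [tendsto_zero_iff_norm_tendsto_zero]
  have h := Real.tendsto_pow_mul_exp_neg_atTop_nhds_zero n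
  have h2 : Filter.Tendsto (fun t : ℝ => (c.re * t) ^ n * Real.exp (-(c.re * t)) / c.re ^ n)
      Filter.atTop (nhds (0 / c.re ^ n)) :=
    (h.comp (Filter.tendsto_id.const_mul_atTop hc)).div_const _
  rw [zero_div] at h2
  refine h2.congr' ?_
  filter_upwards [Filter.eventually_gt_atTop 0] with t ht
  rw [norm_pow_mul_cexp n c ht, mul_pow]
  field_simp

lemma integral_pow_mul_cexp (n : ℕ) {c : ℂ} (hc : 0 < c.re) :
    ∫ t in Set.Ioi (0 : ℝ), (t : ℂ) ^ n * Complex.exp (-(c * t)) = n.factorial / c ^ (n + 1) := by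
  have hc0 : c ≠ 0 := by rintro rfl; simp at hc
  induction n with
  | zero =>
    have := integral_exp_mul_complex_Ioi (a := -c) (by simpa using hc) 0
    simpa [neg_mul] using this
  | succ n ih =>
    have hv : ∀ x ∈ Set.Ioi (0 : ℝ), HasDerivAt (fun t : ℝ => -Complex.exp (-(c * t)) / c)
        (Complex.exp (-(c * x))) x := by
      intro x _
      have h1 : HasDerivAt (fun t : ℂ => -Complex.exp (-(c * t)) / c)
          (Complex.exp (-(c * x))) (x : ℂ) := by
        have := ((((hasDerivAt_id (x : ℂ)).const_mul c).neg).cexp.neg).div_const c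
        convert! this using 1
        simp; field_simp
      exact h1.comp_ofReal
    have hu : ∀ x ∈ Set.Ioi (0 : ℝ), HasDerivAt (fun t : ℝ => (t : ℂ) ^ (n + 1))
        (((n : ℂ) + 1) * (x : ℂ) ^ n) x := by
      intro x _
      have := (hasDerivAt_pow (n + 1) (x : ℂ)).comp_ofReal
      simpa using this
    have key := integral_Ioi_mul_deriv_eq_deriv_mul (a' := 0) (b' := 0) hu hv
      (integrableOn_pow_mul_cexp (n + 1) hc) ?_ ?_ ?_
    · rw [key]
      have : ∀ x : ℝ, ((n : ℂ) + 1) * (x : ℂ) ^ n * (-Complex.exp (-(c * x)) / c) =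
          (-((n : ℂ) + 1) / c) * ((x : ℂ) ^ n * Complex.exp (-(c * x))) := by
        intro x; ring
      simp_rw [this]
      rw [integral_const_mul, ih, Nat.factorial_succ]
      push_cast
      field_simp
      ring
    · have := (integrableOn_pow_mul_cexp n hc).const_mul (-((n : ℂ) + 1) / c)
      refine this.congr (ae_of_all _ fun x => ?_)
      simp only [Pi.mul_apply]; ring
    · have : Continuous (fun t : ℝ => (t : ℂ) ^ (n + 1) * (-Complex.exp (-(c * t)) / c)) := by
        fun_prop
      have h := this.tendsto 0
      simp only [Complex.ofReal_zero, ne_eq, Nat.add_eq_zero_iff, one_ne_zero, and_false,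
        not_false_eq_true, zero_pow, zero_mul] at h
      exact h.mono_left nhdsWithin_le_nhds
    · have h := (tendsto_pow_mul_cexp (n + 1) hc).mul_const (-1 / c)
      rw [zero_mul] at h
      refine h.congr fun x => ?_
      simp only [Pi.mul_apply]; ring

/-- `e^{qt} - σ e^{-qt}`: it is `2 cosh (qt)` for `σ = -1` and `2 sinh (qt)` for `σ = 1`. -/
noncomputable def hyp (σ q : ℂ) (t : ℝ) : ℂ := Complex.exp (q * t) - σ * Complex.exp (-(q * t))

lemma hasSum_inv_hyp {σ q : ℂ} (hσ : ‖σ‖ = 1) (hq : 0 < q.re) {t : ℝ} (ht : 0 < t) :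
    HasSum (fun l : ℕ => σ ^ l * Complex.exp (-((2 * l + 1) * q * t))) (1 / hyp σ q t) := by
  have hr : ‖σ * Complex.exp (-(2 * q * t))‖ < 1 := by
    rw [norm_mul, hσ, one_mul, Complex.norm_exp, Real.exp_lt_one_iff]
    simp
    positivity
  have h := (hasSum_geometric_of_norm_lt_one hr).mul_left (Complex.exp (-(q * t)))
  have h1 : 1 - σ * Complex.exp (-(2 * q * t)) ≠ 0 := by
    intro h0
    rw [← sub_eq_zero.mp h0] at hr
    simp at hr
  have e1 : Complex.exp (-(2 * q * t)) = Complex.exp (-(q * t)) * Complex.exp (-(q * t)) := by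
    rw [← Complex.exp_add]; congr 1; ring
  have e2 : hyp σ q t = Complex.exp (q * t) * (1 - σ * Complex.exp (-(2 * q * t))) := by
    have : Complex.exp (q * t) * Complex.exp (-(q * t)) = 1 := by
      rw [← Complex.exp_add]; simp
    rw [hyp, e1]
    linear_combination (σ * Complex.exp (-(q * t))) * this
  convert! h using 1
  · ext l
    rw [mul_pow, ← Complex.exp_nat_mul, mul_left_comm, ← Complex.exp_add]
    congr 2; ring
  · rw [e2, one_div, mul_inv, ← Complex.exp_neg]

lemma integral_norm_pow_mul_cexp_le (n : ℕ) {b : ℝ} (hb : 0 < b) (C : ℝ) {F : ℝ → ℂ}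
    (hF : AEStronglyMeasurable F (volume.restrict (Set.Ioi 0)))
    (h : ∀ t : ℝ, 0 < t → ‖F t‖ ≤ C * (t ^ n * Real.exp (-(b * t)))) :
    IntegrableOn F (Set.Ioi 0) ∧
      ∫ t in Set.Ioi (0 : ℝ), ‖F t‖ ≤ C * (n.factorial / b ^ (n + 1)) := by
  have hi := (integrableOn_pow_mul_exp n hb).const_mul C
  have h' : ∀ᵐ t ∂(volume.restrict (Set.Ioi (0 : ℝ))),
      ‖F t‖ ≤ C * (t ^ n * Real.exp (-(b * t))) := by
    filter_upwards [ae_restrict_mem measurableSet_Ioi] with t ht using h t ht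
  have hint : IntegrableOn F (Set.Ioi 0) := Integrable.mono' hi hF h'
  refine ⟨hint, ?_⟩
  rw [← integral_pow_mul_exp n hb, ← integral_const_mul]
  exact integral_mono_ae hint.norm hi h'

lemma summable_const_div_linear_pow (A : ℝ) {b c : ℝ} (hb : 0 < b) (hc : 0 ≤ c) {n : ℕ}
    (hn : 1 ≤ n) : Summable fun l : ℕ => A / ((2 * l + 1) * b + c) ^ (n + 1) := by
  have h1 : Summable fun l : ℕ => (1 : ℝ) / ((l : ℝ) + 1) ^ (n + 1) := by
    have := (Real.summable_one_div_nat_pow (p := n + 1)).mpr (by omega)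
    simpa using (summable_nat_add_iff 1).mpr this
  have h2 : Summable fun l : ℕ => (1 : ℝ) / ((2 * l + 1) * b + c) ^ (n + 1) := by
    refine Summable.of_nonneg_of_le (fun l => by positivity) (fun l => ?_)
      (h1.mul_left (1 / b ^ (n + 1)))
    rw [one_div_mul_one_div, ← mul_pow]
    refine one_div_le_one_div_of_le (by positivity) (pow_le_pow_left₀ (by positivity) ?_ _)
    have : 0 ≤ (l : ℝ) * b := by positivity
    linarith
  simpa [div_eq_mul_inv] using h2.mul_left A

/-- Termwise integration of the geometric expansion of the second factor. -/
lemma hasSum_inner {σ p q : ℂ} (hσ : ‖σ‖ = 1) (hp : 0 < p.re) (hq : 0 < q.re) {n : ℕ}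
    (hn : 1 ≤ n) (l : ℕ) :
    HasSum (fun m : ℕ => σ ^ m * (n.factorial / ((2 * l + 1) * p + (2 * m + 1) * q) ^ (n + 1)))
      (∫ t in Set.Ioi (0 : ℝ), Complex.exp (-((2 * l + 1) * p * t)) *
        ((t : ℂ) ^ n / hyp σ q t)) := by
  set c : ℕ → ℂ := fun m => (2 * l + 1) * p + (2 * m + 1) * q with hc
  have hcre : ∀ m : ℕ, (c m).re = (2 * m + 1) * q.re + (2 * l + 1) * p.re := by
    intro m
    have h1 : ((2 * l + 1 : ℂ) * p).re = (2 * l + 1) * p.re := by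
      have : (2 * l + 1 : ℂ) = ((2 * l + 1 : ℝ) : ℂ) := by push_cast; rfl
      rw [this, Complex.re_ofReal_mul]
    have h2 : ((2 * m + 1 : ℂ) * q).re = (2 * m + 1) * q.re := by
      have : (2 * m + 1 : ℂ) = ((2 * m + 1 : ℝ) : ℂ) := by push_cast; rfl
      rw [this, Complex.re_ofReal_mul]
    rw [hc, Complex.add_re, h1, h2, add_comm]
  have hcpos : ∀ m, 0 < (c m).re := fun m => by rw [hcre]; positivity
  have h := hasSum_integral_of_summable_integral_norm
    (μ := volume.restrict (Set.Ioi (0 : ℝ)))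
    (F := fun (m : ℕ) (t : ℝ) => σ ^ m * ((t : ℂ) ^ n * Complex.exp (-(c m * t))))
    (fun m => (integrableOn_pow_mul_cexp n (hcpos m)).const_mul _) ?_
  · convert! h using 1
    · ext m
      rw [integral_const_mul, integral_pow_mul_cexp n (hcpos m)]
    · refine setIntegral_congr_fun measurableSet_Ioi fun t ht => ?_
      have := ((hasSum_inv_hyp hσ hq ht).mul_left
        (Complex.exp (-((2 * l + 1) * p * t)) * (t : ℂ) ^ n)).tsum_eq
      rw [div_eq_mul_one_div, ← mul_assoc, ← this]
      refine tsum_congr fun m => ?_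
      have e : Complex.exp (-(c m * t)) = Complex.exp (-((2 * l + 1) * p * t)) *
          Complex.exp (-((2 * m + 1) * q * t)) := by
        rw [← Complex.exp_add, hc]; congr 1; ring
      rw [e]; ring
  · refine (summable_const_div_linear_pow n.factorial hq
      (c := (2 * l + 1) * p.re) (by positivity) hn).congr fun m => ?_
    rw [← hcre, ← integral_pow_mul_exp n (hcpos m)]
    refine setIntegral_congr_fun measurableSet_Ioi fun t ht => ?_
    rw [norm_mul, norm_pow, hσ, one_pow, one_mul, norm_pow_mul_cexp n _ ht]

/-- Termwise integration of the geometric expansion of the first factor. -/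
lemma hasSum_outer {σ p q : ℂ} (hσ : ‖σ‖ = 1) (hp : 0 < p.re) {n M : ℕ}
    (hM : 1 ≤ M) {C : ℝ}
    (hbound : ∀ t : ℝ, 0 < t → ‖(t : ℂ) ^ n / hyp σ q t‖ ≤ C * t ^ M) :
    HasSum (fun l : ℕ => σ ^ l * ∫ t in Set.Ioi (0 : ℝ), Complex.exp (-((2 * l + 1) * p * t)) *
        ((t : ℂ) ^ n / hyp σ q t))
      (∫ t in Set.Ioi (0 : ℝ), (t : ℂ) ^ n / (hyp σ p t * hyp σ q t)) := by
  have hmeas : Measurable fun t : ℝ => (t : ℂ) ^ n / hyp σ q t := by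
    unfold hyp; fun_prop
  have hre : ∀ (l : ℕ) (t : ℝ), (-((2 * l + 1) * p * t) : ℂ).re = -((2 * l + 1) * p.re * t) := by
    intro l t
    have : (-((2 * l + 1) * p * t) : ℂ) = ((-((2 * l + 1) * t) : ℝ) : ℂ) * p := by
      push_cast; ring
    rw [this, Complex.re_ofReal_mul]; ring
  have key : ∀ l : ℕ, _ := fun l => integral_norm_pow_mul_cexp_le M
    (b := (2 * l + 1) * p.re) (by positivity) C
    (F := fun t : ℝ => σ ^ l * (Complex.exp (-((2 * l + 1) * p * t)) *
        ((t : ℂ) ^ n / hyp σ q t)))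
    ((by fun_prop : Measurable _).aestronglyMeasurable)
    (by
      intro t ht
      rw [norm_mul, norm_pow, hσ, one_pow, one_mul, norm_mul, Complex.norm_exp, hre]
      have := mul_le_mul_of_nonneg_left (hbound t ht)
        (Real.exp_pos (-((2 * l + 1) * p.re * t))).le
      linarith)
  have h := hasSum_integral_of_summable_integral_norm
    (μ := volume.restrict (Set.Ioi (0 : ℝ)))
    (F := fun (l : ℕ) (t : ℝ) => σ ^ l * (Complex.exp (-((2 * l + 1) * p * t)) *
        ((t : ℂ) ^ n / hyp σ q t))) (fun l => (key l).1) ?_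
  · convert! h using 1
    · ext l
      rw [integral_const_mul]
    · refine setIntegral_congr_fun measurableSet_Ioi fun t ht => ?_
      have := ((hasSum_inv_hyp hσ hp ht).mul_right ((t : ℂ) ^ n / hyp σ q t)).tsum_eq
      simp_rw [mul_assoc] at this ⊢
      rw [this]
      ring
  · refine Summable.of_nonneg_of_le (fun l => by positivity) (fun l => (key l).2) ?_
    have := summable_const_div_linear_pow (C * M.factorial) (b := p.re) (c := 0) hp le_rfl hM
    simpa [mul_div_assoc] using this

/-! ### Convolution of bilateral Lambert series -/

/-- `y^{-j} + y^j`, an unnormalised `cosh`. -/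
noncomputable def cq (y : ℂ) (j : ℤ) : ℂ := y ^ (-j) + y ^ j

/-- `y^{-j} - y^j`, an unnormalised `sinh`. -/
noncomputable def dq (y : ℂ) (j : ℤ) : ℂ := y ^ (-j) - y ^ j

/-- The weights `(-1)^r / (y^{-(2r+1)} + y^{2r+1})` of the bilateral Lambert series. -/
noncomputable def uq (y : ℂ) (r : ℤ) : ℂ := (-1) ^ r / cq y (2 * r + 1)

/-- The bilateral Lambert series `∑_{r ∈ ℤ} (-1)^r (2r+1)^m / (y^{-(2r+1)} + y^{2r+1})`. -/
noncomputable def Aq (y : ℂ) (m : ℕ) : ℂ := ∑' r : ℤ, uq y r * ((2 * r + 1 : ℤ) : ℂ) ^ m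

lemma cq_neg (y : ℂ) (j : ℤ) : cq y (-j) = cq y j := by simp [cq, add_comm]

lemma dq_neg (y : ℂ) (j : ℤ) : dq y (-j) = -dq y j := by simp [dq]

lemma cq_lower {y : ℂ} (hy0 : y ≠ 0) (hy : ‖y‖ < 1) {j : ℤ} (hj : j ≠ 0) :
    (1 - ‖y‖) * (‖y‖ ^ j.natAbs)⁻¹ ≤ ‖cq y j‖ := by
  have hn : 0 < ‖y‖ := norm_pos_iff.mpr hy0
  wlog hpos : 0 < j generalizing j
  · have := this (j := -j) (by omega) (by omega)
    rwa [cq_neg, Int.natAbs_neg] at this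
  obtain ⟨m, rfl⟩ := Int.eq_ofNat_of_zero_le hpos.le
  have hm : m ≠ 0 := by rintro rfl; simp at hj
  have h1 : ‖y ^ (-(m : ℤ))‖ - ‖y ^ (m : ℤ)‖ ≤ ‖cq y m‖ := by
    have := norm_sub_norm_le (y ^ (-(m : ℤ))) (-(y ^ (m : ℤ)))
    rwa [norm_neg, sub_neg_eq_add] at this
  refine le_trans ?_ h1
  simp only [zpow_neg, norm_inv, zpow_natCast, norm_pow, Int.natAbs_natCast]
  have hp : 0 < ‖y‖ ^ m := pow_pos hn m
  have hle : ‖y‖ ^ m ≤ ‖y‖ := pow_le_of_le_one hn.le hy.le hm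
  have hinv : 1 ≤ (‖y‖ ^ m)⁻¹ := (one_le_inv₀ hp).mpr (hle.trans hy.le)
  nlinarith [mul_le_mul_of_nonneg_left hinv hn.le]

lemma cq_ne_zero {y : ℂ} (hy0 : y ≠ 0) (hy : ‖y‖ < 1) {j : ℤ} (hj : j ≠ 0) : cq y j ≠ 0 := by
  have hn : 0 < ‖y‖ := norm_pos_iff.mpr hy0
  have h := cq_lower hy0 hy hj
  have : 0 < (1 - ‖y‖) * (‖y‖ ^ j.natAbs)⁻¹ := mul_pos (by linarith) (by positivity)
  exact norm_pos_iff.mp (this.trans_le h)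

lemma dq_ne_zero {y : ℂ} (hy0 : y ≠ 0) (hy : ‖y‖ < 1) {j : ℤ} (hj : j ≠ 0) : dq y j ≠ 0 := by
  wlog hpos : 0 < j generalizing j
  · have := this (j := -j) (by omega) (by omega)
    rwa [dq_neg, neg_ne_zero] at this
  obtain ⟨m, rfl⟩ := Int.eq_ofNat_of_zero_le hpos.le
  have hm : m ≠ 0 := by rintro rfl; simp at hj
  intro h
  have h2 := congrArg norm (sub_eq_zero.mp h)
  have hn : 0 < ‖y‖ := norm_pos_iff.mpr hy0
  simp only [zpow_neg, norm_inv, zpow_natCast, norm_pow] at h2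
  have hlt : ‖y‖ ^ m < 1 := pow_lt_one₀ hn.le hy hm
  have : 1 < (‖y‖ ^ m)⁻¹ := (one_lt_inv₀ (by positivity)).mpr hlt
  linarith

lemma summable_natAbs_pow_geom (m : ℕ) {ρ : ℝ} (h0 : 0 ≤ ρ) (h1 : ρ < 1) :
    Summable fun j : ℤ => (j.natAbs : ℝ) ^ m * ρ ^ j.natAbs := by
  have h := summable_pow_mul_geometric_of_norm_lt_one m (r := ρ)
    (by rwa [Real.norm_of_nonneg h0])
  exact Summable.of_nat_of_neg (by simpa using h) (by simpa using h)

lemma summable_odd_pow_div_cq {y : ℂ} (hy0 : y ≠ 0) (hy : ‖y‖ < 1) (m : ℕ) :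
    Summable fun r : ℤ => ‖((2 * r + 1 : ℤ) : ℂ) ^ m / cq y (2 * r + 1)‖ := by
  have hn : 0 < ‖y‖ := norm_pos_iff.mpr hy0
  have hinj : Function.Injective fun r : ℤ => 2 * r + 1 := by
    intro a b h; simp only at h; omega
  have h := ((summable_natAbs_pow_geom m hn.le hy).comp_injective hinj).mul_left (1 / (1 - ‖y‖))
  refine Summable.of_nonneg_of_le (fun r => norm_nonneg _) (fun r => ?_) h
  have hl := cq_lower hy0 hy (j := 2 * r + 1) (by omega)
  have h1 : 0 < 1 - ‖y‖ := by linarith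
  have hnorm : ‖((2 * r + 1 : ℤ) : ℂ)‖ = ((2 * r + 1).natAbs : ℝ) := by
    rw [Complex.norm_intCast, Nat.cast_natAbs, Int.cast_abs]
  rw [norm_div, norm_pow, hnorm]
  simp only [Function.comp]
  calc ((2 * r + 1).natAbs : ℝ) ^ m / ‖cq y (2 * r + 1)‖
      ≤ ((2 * r + 1).natAbs : ℝ) ^ m / ((1 - ‖y‖) * (‖y‖ ^ (2 * r + 1).natAbs)⁻¹) := by
        gcongr
    _ = _ := by field_simp

lemma norm_neg_one_zpow (r : ℤ) : ‖(-1 : ℂ) ^ r‖ = 1 := by simp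

lemma summable_norm_uq {y : ℂ} (hy0 : y ≠ 0) (hy : ‖y‖ < 1) (m : ℕ) :
    Summable fun r : ℤ => ‖uq y r * ((2 * r + 1 : ℤ) : ℂ) ^ m‖ := by
  refine (summable_odd_pow_div_cq hy0 hy m).congr fun r => ?_
  rw [uq, norm_mul, norm_div, norm_div, norm_neg_one_zpow]
  ring

/-- `r ↦ -1 - r`, which sends `2r+1` to its negative. -/
def flipEquiv : ℤ ≃ ℤ := ⟨fun r => -1 - r, fun r => -1 - r, fun r => by ring, fun r => by ring⟩

lemma uq_flip (y : ℂ) (r : ℤ) : uq y (-1 - r) = -uq y r := by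
  have h : (-1 : ℂ) ^ (-1 - r) = -(-1) ^ r := by
    rcases Int.even_or_odd r with h | h
    · rw [h.neg_one_zpow, Odd.neg_one_zpow (by grind)]
    · rw [h.neg_one_zpow, Even.neg_one_zpow (by grind)]; simp
  rw [uq, uq, h, show 2 * (-1 - r) + 1 = -(2 * r + 1) by ring, cq_neg, neg_div]

lemma Aq_even (y : ℂ) {m : ℕ} (hm : Even m) : Aq y m = 0 := by
  have h : Aq y m = -Aq y m := by
    conv_lhs => rw [Aq, ← flipEquiv.tsum_eq]
    rw [Aq, ← tsum_neg]
    refine tsum_congr fun r => ?_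
    change uq y (-1 - r) * ((2 * (-1 - r) + 1 : ℤ) : ℂ) ^ m = _
    rw [uq_flip, show 2 * (-1 - r) + 1 = -(2 * r + 1) by ring, Int.cast_neg, hm.neg_pow]
    ring
  exact self_eq_neg.mp h

/-- The quotient of `dq` by `cq`, a hyperbolic tangent, at the odd integer `2r+1`. -/
noncomputable def thq (y : ℂ) (r : ℤ) : ℂ := dq y (2 * r + 1) / cq y (2 * r + 1)

/-- The sign of the odd integer `2r+1`. -/
def sgnq (r : ℤ) : ℂ := if 0 ≤ r then 1 else -1

lemma summable_thq_sub_sgnq {y : ℂ} (hy0 : y ≠ 0) (hy : ‖y‖ < 1) :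
    Summable fun r => thq y r - sgnq r := by
  have h0 := (summable_odd_pow_div_cq hy0 hy 0).mul_left 2
  refine Summable.of_norm_bounded h0 fun r => ?_
  have hle : ∀ j : ℤ, 0 ≤ j → ‖y ^ j‖ ≤ 1 := by
    intro j hj
    obtain ⟨m, rfl⟩ := Int.eq_ofNat_of_zero_le hj
    simpa using pow_le_one₀ (norm_nonneg y) hy.le
  have hc : cq y (2 * r + 1) ≠ 0 := cq_ne_zero hy0 hy (by omega)
  by_cases hr : 0 ≤ r
  · have : thq y r - sgnq r = (-2 * y ^ (2 * r + 1)) * (1 / cq y (2 * r + 1)) := by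
      simp only [thq, sgnq, hr, if_true]
      rw [div_sub' hc, mul_one_div]
      congr 1
      simp only [dq, cq]; ring
    rw [this, norm_mul, norm_mul, pow_zero, norm_neg, Complex.norm_ofNat]
    gcongr
    linarith [hle (2 * r + 1) (by omega)]
  · have : thq y r - sgnq r = (2 * y ^ (-(2 * r + 1))) * (1 / cq y (2 * r + 1)) := by
      simp only [thq, sgnq, hr, if_false]
      rw [div_sub' hc, mul_one_div]
      congr 1
      simp only [dq, cq]; ring
    rw [this, norm_mul, norm_mul, pow_zero, Complex.norm_ofNat]
    gcongr
    linarith [hle (-(2 * r + 1)) (by omega)]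

lemma hasSum_sgnq_sub (N : ℕ) : HasSum (fun r : ℤ => sgnq r - sgnq (r - N)) (2 * N) := by
  have : HasSum (fun r : ℤ => sgnq r - sgnq (r - N))
      (∑ r ∈ Finset.Ico (0 : ℤ) N, (sgnq r - sgnq (r - N))) := by
    refine hasSum_sum_of_ne_finset_zero fun r hr => ?_
    simp only [Finset.mem_Ico, not_and, not_lt] at hr
    simp only [sgnq]
    by_cases h : 0 ≤ r
    · have := hr h
      rw [if_pos h, if_pos (by omega), sub_self]
    · rw [if_neg h, if_neg (by omega), sub_self]
  convert! this using 1
  rw [Finset.sum_congr rfl (g := fun _ => (2 : ℂ))]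
  · simp [mul_comm]
  · intro r hr
    simp only [Finset.mem_Ico] at hr
    simp only [sgnq]
    rw [if_pos hr.1, if_neg (by omega)]; norm_num

/-- Partial fractions, from the addition formula for the hyperbolic tangent. -/
lemma one_div_cq_mul_cq {y : ℂ} (hy0 : y ≠ 0) (hy : ‖y‖ < 1) {N : ℕ} (hN : N ≠ 0) (r : ℤ) :
    1 / (cq y (2 * r + 1) * cq y (2 * (N - 1 - r) + 1)) =
      1 / (2 * dq y (2 * N)) * (thq y r - thq y (r - N)) := by
  have hs : dq y (2 * N) ≠ 0 := dq_ne_zero hy0 hy (by omega)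
  have e1 : cq y (2 * (N - 1 - r) + 1) = cq y (2 * (r - N) + 1) := by
    rw [← cq_neg]; congr 1; ring
  have key : 2 * dq y (2 * N) = dq y (2 * r + 1) * cq y (2 * (r - N) + 1) -
      cq y (2 * r + 1) * dq y (2 * (r - N) + 1) := by
    have a1 : y ^ (2 * (r - N) + 1) = y ^ (2 * r + 1) * y ^ (-(2 * N : ℤ)) := by
      rw [← zpow_add₀ hy0]; congr 1; ring
    have a2 : y ^ (-(2 * (r - N) + 1)) = y ^ (-(2 * r + 1)) * y ^ (2 * N : ℤ) := by
      rw [← zpow_add₀ hy0]; congr 1; ring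
    have a3 : y ^ (2 * r + 1) * y ^ (-(2 * r + 1)) = 1 := by
      rw [← zpow_add₀ hy0]; simp
    simp only [dq, cq, a1, a2]
    generalize y ^ (2 * r + 1) = P at *
    generalize y ^ (-(2 * r + 1)) = Q at *
    linear_combination (2 * y ^ (2 * N : ℤ) - 2 * y ^ (-(2 * N : ℤ))) * a3
  have h1 : cq y (2 * r + 1) ≠ 0 := cq_ne_zero hy0 hy (by omega)
  have h2 : cq y (2 * (r - N) + 1) ≠ 0 := cq_ne_zero hy0 hy (by omega)
  rw [e1, thq, thq, div_sub_div _ _ h1 h2, ← key]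
  generalize cq y (2 * r + 1) = P at *
  generalize cq y (2 * (r - N) + 1) = Q at *
  generalize dq y (2 * N) = R at *
  field_simp

/-- The convolution of the weights: by partial fractions it is the sum of the difference between
`thq y` and its shift by `N`, and `thq y` tends to `±1` at `±∞`. -/
lemma hasSum_conv {y : ℂ} (hy0 : y ≠ 0) (hy : ‖y‖ < 1) (N : ℕ) (hN : N ≠ 0) :
    HasSum (fun r : ℤ => 1 / (cq y (2 * r + 1) * cq y (2 * (N - 1 - r) + 1)))
      (N / dq y (2 * N)) := by
  have hh := (summable_thq_sub_sgnq hy0 hy).hasSum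
  have hshift := (Equiv.subRight (N : ℤ)).hasSum_iff.mpr hh
  simp only [Function.comp_def, Equiv.subRight_apply] at hshift
  have hall := ((hh.sub hshift).add (hasSum_sgnq_sub N)).mul_left (1 / (2 * dq y (2 * N)))
  rw [sub_self, zero_add, show 1 / (2 * dq y (2 * N)) * (2 * N) = N / dq y (2 * N) by
    rw [div_mul_eq_mul_div, one_mul, mul_div_mul_left _ _ two_ne_zero]] at hall
  have e : (fun r : ℤ => 1 / (cq y (2 * r + 1) * cq y (2 * (N - 1 - r) + 1))) =
      fun r : ℤ => 1 / (2 * dq y (2 * N)) *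
        (thq y r - sgnq r - (thq y (r - N) - sgnq (r - N)) + (sgnq r - sgnq (r - N))) := by
    ext r
    rw [one_div_cq_mul_cq hy0 hy hN]
    ring
  rw [e]
  exact hall

/-- Sum along the antidiagonal `r + s + 1 = N`, for every integer `N`. -/
lemma hasSum_antidiag {y : ℂ} (hy0 : y ≠ 0) (hy : ‖y‖ < 1) (n : ℕ) (N : ℤ) :
    HasSum (fun r : ℤ => uq y r * uq y (N - 1 - r) * ((2 * N : ℤ) : ℂ) ^ (2 * n + 2))
      (-(2 ^ (2 * n + 2) * ((-1) ^ N * (N : ℂ) ^ (2 * n + 3) / dq y (2 * N)))) := by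
  wlog hpos : 0 ≤ N generalizing N
  · have h := flipEquiv.hasSum_iff.mpr (this (-N) (by omega))
    convert! h using 1
    · ext r
      change _ = uq y (-1 - r) * uq y (-N - 1 - (-1 - r)) * ((2 * -N : ℤ) : ℂ) ^ (2 * n + 2)
      rw [show -N - 1 - (-1 - r) = -1 - (N - 1 - r) by ring, uq_flip, uq_flip]
      have : Even (2 * n + 2) := ⟨n + 1, by ring⟩
      rw [show 2 * -N = -(2 * N) by ring, Int.cast_neg, this.neg_pow]
      ring
    · have : Odd (2 * n + 3) := ⟨n + 1, by ring⟩
      rw [show 2 * -N = -(2 * N) by ring, dq_neg, Int.cast_neg, this.neg_pow]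
      have : (-1 : ℂ) ^ (-N) = (-1) ^ N := by
        rw [zpow_neg, ← inv_zpow]; norm_num
      rw [this]; ring
  obtain ⟨N, rfl⟩ := Int.eq_ofNat_of_zero_le hpos
  rcases eq_or_ne N 0 with rfl | hN
  · simp [hasSum_zero]
  have h := (hasSum_conv hy0 hy N hN).mul_left
    (-(-1) ^ N * ((2 * N : ℤ) : ℂ) ^ (2 * n + 2))
  convert! h using 1
  · ext r
    have : (-1 : ℂ) ^ r * (-1) ^ ((N : ℤ) - 1 - r) = -(-1) ^ N := by
      rw [← zpow_add₀ (by norm_num), show r + ((N : ℤ) - 1 - r) = N - 1 by ring,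
        zpow_sub₀ (by norm_num), zpow_natCast, zpow_one, div_neg, div_one]
    rw [← this, uq, uq]
    ring
  · push_cast; rw [zpow_natCast]; ring

lemma hasSum_double {y : ℂ} (hy0 : y ≠ 0) (hy : ‖y‖ < 1) (i j : ℕ) :
    HasSum (fun x : ℤ × ℤ => (uq y x.1 * ((2 * x.1 + 1 : ℤ) : ℂ) ^ i) *
      (uq y x.2 * ((2 * x.2 + 1 : ℤ) : ℂ) ^ j)) (Aq y i * Aq y j) := by
  have hi := summable_norm_uq hy0 hy i
  have hj := summable_norm_uq hy0 hy j
  rw [Aq, Aq, tsum_mul_tsum_of_summable_norm hi hj]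
  exact (summable_mul_of_summable_norm hi hj).hasSum

/-- `(N, r) ↦ (r, s)` with `s = N - 1 - r`, so that `r + s + 1 = N`: the fibres over `N` are the
antidiagonals. -/
def antidiagEquiv : ℤ × ℤ ≃ ℤ × ℤ where
  toFun x := (x.2, x.1 - 1 - x.2)
  invFun x := (x.1 + x.2 + 1, x.1)
  left_inv x := by ext <;> simp
  right_inv x := by ext <;> simp

/-- The binomial theorem turns the sum of products into a double series weighted by
`(2s+1) (2r+1 + 2s+1)^(2n+1)`; symmetrising in `r, s` replaces the weight by
`(2r+1 + 2s+1)^(2n+2) / 2`, which is constant on antidiagonals. -/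
theorem Aq_convolution {y : ℂ} (hy0 : y ≠ 0) (hy : ‖y‖ < 1) (n : ℕ) :
    ∑ p ∈ Finset.range (n + 1), ((2 * n + 1).choose (2 * p + 1) : ℂ) *
      Aq y (2 * p + 1) * Aq y (2 * (n - p) + 1) =
    -(2 ^ (2 * n + 2) * ∑' N : ℕ, (-1) ^ N * (N : ℂ) ^ (2 * n + 3) / dq y (2 * N)) := by
  have hfull : ∑ p ∈ Finset.range (n + 1), ((2 * n + 1).choose (2 * p + 1) : ℂ) *
      Aq y (2 * p + 1) * Aq y (2 * (n - p) + 1) =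
      ∑ j ∈ Finset.range (2 * n + 1 + 1), Aq y j * Aq y (2 * n + 1 - j + 1) *
        ((2 * n + 1).choose j : ℂ) := by
    have hsplit : ∀ f : ℕ → ℂ, ∑ j ∈ Finset.range (2 * n + 1 + 1), f j =
        ∑ p ∈ Finset.range (n + 1), (f (2 * p) + f (2 * p + 1)) := by
      intro f
      clear hy0 hy
      induction n with
      | zero => simp [Finset.sum_range_succ]
      | succ n ih =>
        rw [Finset.sum_range_succ _ (n + 1), ← ih,
          show 2 * (n + 1) + 1 + 1 = 2 * n + 1 + 1 + 1 + 1 by ring,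
          Finset.sum_range_succ, Finset.sum_range_succ,
          show 2 * (n + 1) = 2 * n + 1 + 1 by ring]
        ring
    rw [hsplit]
    refine Finset.sum_congr rfl fun p hp => ?_
    have hp' : p ≤ n := by simpa [Nat.lt_succ_iff] using hp
    rw [Aq_even y (m := 2 * p) (by simp),
      show 2 * n + 1 - (2 * p + 1) + 1 = 2 * (n - p) + 1 by omega]
    ring
  have h1 : HasSum (fun x : ℤ × ℤ => uq y x.1 * uq y x.2 * ((2 * x.2 + 1 : ℤ) : ℂ) *
      ((2 * x.1 + 1 : ℤ) + (2 * x.2 + 1 : ℤ) : ℂ) ^ (2 * n + 1))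
      (∑ j ∈ Finset.range (2 * n + 1 + 1), Aq y j * Aq y (2 * n + 1 - j + 1) *
        ((2 * n + 1).choose j : ℂ)) := by
    have := hasSum_sum (s := Finset.range (2 * n + 1 + 1)) fun j _ =>
      (hasSum_double hy0 hy j (2 * n + 1 - j + 1)).mul_right ((2 * n + 1).choose j : ℂ)
    convert! this using 1
    ext x
    rw [add_pow, Finset.mul_sum]
    refine Finset.sum_congr rfl fun j _ => ?_
    ring
  rw [hfull]
  generalize (∑ j ∈ Finset.range (2 * n + 1 + 1), Aq y j * Aq y (2 * n + 1 - j + 1) *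
        ((2 * n + 1).choose j : ℂ)) = B at h1
  have h2 := (h1.add ((Equiv.prodComm ℤ ℤ).hasSum_iff.mpr h1))
  have h3 : HasSum (fun x : ℤ × ℤ => uq y x.1 * uq y (x.2) *
      ((2 * (x.1 + x.2 + 1) : ℤ) : ℂ) ^ (2 * n + 2)) (B + B) := by
    convert! h2 using 1
    ext x
    simp only [Function.comp, Equiv.prodComm_apply, Prod.fst_swap, Prod.snd_swap]
    push_cast; ring
  have h4 := antidiagEquiv.hasSum_iff.mpr h3
  have h5 := h4.prod_fiberwise (g := fun N : ℤ =>
    (-(2 ^ (2 * n + 2) * ((-1) ^ N * (N : ℂ) ^ (2 * n + 3) / dq y (2 * N))))) (by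
      intro N
      have := hasSum_antidiag hy0 hy n N
      convert! this using 1
      ext r
      simp only [Function.comp, antidiagEquiv, Equiv.coe_fn_mk]
      congr 3
      ring)
  have h6 := h5.nat_add_neg
  have h7 : HasSum (fun N : ℕ => 2 * (-(2 ^ (2 * n + 2) *
      ((-1) ^ N * (N : ℂ) ^ (2 * n + 3) / dq y (2 * N))))) (B + B + 0) := by
    convert! h6 using 1
    · ext N
      have : Odd (2 * n + 3) := ⟨n + 1, by ring⟩
      rw [show 2 * -(N : ℤ) = -(2 * N) by ring, dq_neg, Int.cast_neg, this.neg_pow,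
        zpow_neg, ← inv_zpow, inv_neg_one, zpow_natCast, Int.cast_natCast]
      ring
    · simp
  have h8 := h7.tsum_eq
  rw [tsum_mul_left, tsum_neg, tsum_mul_left] at h8
  linear_combination (-1 / 2) * h8

/-! ### Lipschitz formulas and the combined lattice sum -/

lemma HasSum.int_even_odd {f : ℤ → ℂ} {a b : ℂ} (he : HasSum (fun m : ℤ => f (2 * m)) a)
    (ho : HasSum (fun m : ℤ => f (2 * m + 1)) b) : HasSum f (a + b) := by
  have i1 : Function.Injective fun m : ℤ => 2 * m := by intro x y h; simp only at h; omega
  have i2 : Function.Injective fun m : ℤ => 2 * m + 1 := by intro x y h; simp only at h; omega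
  refine HasSum.add_isCompl ?_ (i1.hasSum_range_iff.mpr he) (i2.hasSum_range_iff.mpr ho)
  constructor
  · rw [Set.disjoint_iff]
    rintro x ⟨⟨u, hu⟩, ⟨v, hv⟩⟩
    simp only at hu hv
    omega
  · rw [codisjoint_iff_le_sup]
    intro x _
    rcases Int.even_or_odd' x with ⟨k, h | h⟩
    · exact Or.inl ⟨k, h.symm⟩
    · exact Or.inr ⟨k, h.symm⟩

lemma norm_cexp_two_pi_I_lt_one {z : ℂ} (hz : 0 < z.im) :
    ‖Complex.exp (2 * π * Complex.I * z)‖ < 1 := by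
  rw [Complex.norm_exp, Real.exp_lt_one_iff]
  simp
  positivity

/-- The Lipschitz formula. -/
lemma hasSum_lipschitz {z : ℂ} (hz : 0 < z.im) {n : ℕ} (hn : 1 ≤ n) :
    HasSum (fun m : ℤ => 1 / (z + m) ^ (n + 1)) ((-2 * π * Complex.I) ^ (n + 1) / n.factorial *
      ∑' j : ℕ, (j : ℂ) ^ n * Complex.exp (2 * π * Complex.I * z) ^ j) := by
  have h := EisensteinSeries.qExpansion_identity hn ⟨z, hz⟩
  have hs : Summable fun m : ℤ => 1 / (z + m) ^ (n + 1) := by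
    have := EisensteinSeries.linear_right_summable z 1 (k := n + 1) (by omega)
    refine this.congr fun m => ?_
    simp only [Int.cast_one, one_mul, one_div]
    norm_cast
  have h2 := hs.hasSum
  rwa [show ∑' m : ℤ, 1 / (z + m) ^ (n + 1) = _ from h] at h2

/-- The alternating version of the Lipschitz formula. -/
lemma hasSum_lipschitz_alt {z : ℂ} (hz : 0 < z.im) {n : ℕ} (hn : 1 ≤ n) :
    HasSum (fun m : ℤ => (-1) ^ m / (z + m) ^ (n + 1))
      ((-π * Complex.I) ^ (n + 1) / n.factorial *
        ∑' j : ℕ, (1 - (-1) ^ j) * (j : ℂ) ^ n * Complex.exp (π * Complex.I * z) ^ j) := by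
  have hz1 : 0 < (z / 2).im := by simpa using hz
  have hz2 : 0 < ((z + 1) / 2).im := by simpa using hz
  have h1 := (hasSum_lipschitz hz1 hn).mul_left ((1 / 2) ^ (n + 1))
  have h2 := (hasSum_lipschitz hz2 hn).mul_left (-(1 / 2) ^ (n + 1))
  have e1 : Complex.exp (2 * π * Complex.I * (z / 2)) = Complex.exp (π * Complex.I * z) := by
    congr 1; ring
  have e2 : Complex.exp (2 * π * Complex.I * ((z + 1) / 2)) =
      -Complex.exp (π * Complex.I * z) := by
    rw [show 2 * π * Complex.I * ((z + 1) / 2) = π * Complex.I * z + π * Complex.I by ring,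
      Complex.exp_add, Complex.exp_pi_mul_I]
    ring
  have hlt := norm_cexp_two_pi_I_lt_one hz1
  rw [e1] at h1 hlt
  rw [e2] at h2
  set Y := Complex.exp (π * Complex.I * z)
  have s1 : Summable fun j : ℕ => (j : ℂ) ^ n * Y ^ j :=
    summable_pow_mul_geometric_of_norm_lt_one n hlt
  have s2 : Summable fun j : ℕ => (j : ℂ) ^ n * (-Y) ^ j :=
    summable_pow_mul_geometric_of_norm_lt_one n (by rwa [norm_neg])
  have h3 := HasSum.int_even_odd (f := fun m : ℤ => (-1 : ℂ) ^ m / (z + m) ^ (n + 1))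
    (a := _) (b := _) (h1.congr_fun ?_) (h2.congr_fun ?_)
  · convert! h3 using 1
    have : ∀ j : ℕ, (1 - (-1) ^ j) * (j : ℂ) ^ n * Y ^ j =
        (j : ℂ) ^ n * Y ^ j - (j : ℂ) ^ n * (-Y) ^ j := by
      intro j; rw [neg_pow Y]; ring
    simp_rw [this]
    rw [s1.tsum_sub s2]
    have : (-2 * π * Complex.I) ^ (n + 1) = 2 ^ (n + 1) * (-π * Complex.I) ^ (n + 1) := by
      rw [← mul_pow]; congr 1; ring
    rw [this, one_div, inv_pow]
    field_simp
    ring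
  · intro m
    have : z + ((2 * m : ℤ) : ℂ) = 2 * (z / 2 + m) := by push_cast; ring
    rw [this, mul_pow, Even.neg_one_zpow (by simp), one_div_pow, one_div_mul_one_div]
  · intro m
    have : z + ((2 * m + 1 : ℤ) : ℂ) = 2 * ((z + 1) / 2 + m) := by push_cast; ring
    rw [this, mul_pow, Odd.neg_one_zpow (by simp), one_div_pow, neg_mul, one_div_mul_one_div,
      neg_div]

/-- Summing a family of geometric series in the opposite order. -/
lemma tsum_geom_swap {y σ : ℂ} (hy0 : y ≠ 0) (hy : ‖y‖ < 1) (hσ : ‖σ‖ = 1) {n : ℕ} (hn : 1 ≤ n)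
    {g : ℕ → ℂ} (hg : ∀ j, ‖g j‖ ≤ 2) :
    ∑' l : ℕ, σ ^ l * ∑' j : ℕ, g j * (j : ℂ) ^ n * y ^ ((2 * l + 1) * j) =
      ∑' j : ℕ, g j * (j : ℂ) ^ n / (y ^ (-(j : ℤ)) - σ * y ^ (j : ℤ)) := by
  have hn0 : n ≠ 0 := by omega
  have hF : Summable (Function.uncurry fun (l j : ℕ) =>
      σ ^ l * (g j * (j : ℂ) ^ n * y ^ ((2 * l + 1) * j))) := by
    have a1 : Summable fun l : ℕ => ‖y‖ ^ l := summable_geometric_of_lt_one (norm_nonneg _) hy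
    have a2 : Summable fun j : ℕ => (j : ℝ) ^ n * ‖y‖ ^ j :=
      summable_pow_mul_geometric_of_norm_lt_one n (by simpa using hy)
    have a3 := (a1.mul_of_nonneg a2 (fun _ => by positivity) (fun _ => by positivity)).mul_left 2
    refine Summable.of_norm_bounded a3 ?_
    rintro ⟨l, j⟩
    simp only [Function.uncurry, norm_mul, norm_pow, hσ, one_pow, one_mul, Complex.norm_natCast]
    rcases Nat.eq_zero_or_pos j with rfl | hj
    · simp [hn0]
    · have : ‖y‖ ^ ((2 * l + 1) * j) ≤ ‖y‖ ^ (l + j) := by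
        refine pow_le_pow_of_le_one (norm_nonneg _) hy.le ?_
        nlinarith
      calc ‖g j‖ * (j : ℝ) ^ n * ‖y‖ ^ ((2 * l + 1) * j)
          ≤ 2 * (j : ℝ) ^ n * ‖y‖ ^ (l + j) := by gcongr; exact hg j
        _ = _ := by rw [pow_add]; ring
  simp_rw [← tsum_mul_left]
  rw [← hF.tsum_comm]
  refine tsum_congr fun j => ?_
  rcases Nat.eq_zero_or_pos j with rfl | hj
  · simp [hn0]
  have hlt : ‖σ * y ^ (2 * j)‖ < 1 := by
    rw [norm_mul, hσ, one_mul, norm_pow]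
    exact pow_lt_one₀ (norm_nonneg _) hy (by omega)
  have hgeo := (hasSum_geometric_of_norm_lt_one hlt).mul_left (g j * (j : ℂ) ^ n * y ^ j)
  have e : ∀ l : ℕ, σ ^ l * (g j * (j : ℂ) ^ n * y ^ ((2 * l + 1) * j)) =
      g j * (j : ℂ) ^ n * y ^ j * (σ * y ^ (2 * j)) ^ l := by
    intro l
    rw [mul_pow, ← pow_mul, show (2 * l + 1) * j = j + 2 * j * l by ring, pow_add]
    ring
  simp_rw [e]
  rw [hgeo.tsum_eq]
  have hyj : y ^ j ≠ 0 := pow_ne_zero _ hy0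
  have hd : y ^ (-(j : ℤ)) - σ * y ^ (j : ℤ) = (y ^ j)⁻¹ * (1 - σ * y ^ (2 * j)) := by
    rw [zpow_neg, zpow_natCast, two_mul, pow_add]
    field_simp
  rw [hd, div_mul_eq_div_div, div_inv_eq_mul, div_eq_mul_inv _ (1 - σ * y ^ (2 * j))]

/-- A lower bound for `2 |cosh (qt)|` uniform in `t`, from `|cosh (x + iv)|² = cos² v + sinh² x`
with `cos² v ≥ 1 - v²` and `sinh² x ≥ x²`, combined with the weights `x²` and `v²`. -/
lemma norm_hyp_neg_one_ge {q : ℂ} (hq : 0 < q.re) {t : ℝ} (ht : 0 < t) :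
    2 * q.re / ‖q‖ ≤ ‖hyp (-1) q t‖ := by
  have hq0 : q ≠ 0 := by rintro rfl; simp at hq
  have hn : 0 < ‖q‖ := norm_pos_iff.mpr hq0
  have hh : hyp (-1) q t = 2 * Complex.cosh (q * t) := by
    rw [hyp, Complex.two_cosh]; ring
  have hnorm : ‖hyp (-1) q t‖ ^ 2 =
      4 * (Real.cos (q.im * t) ^ 2 + Real.sinh (q.re * t) ^ 2) := by
    have e : q * t = ((q.re * t : ℝ) : ℂ) + ((q.im * t : ℝ) : ℂ) * Complex.I := by
      conv_lhs => rw [← Complex.re_add_im q]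
      push_cast; ring
    rw [hh, norm_mul, mul_pow, ← Complex.normSq_eq_norm_sq (Complex.cosh _), e, Complex.cosh_add,
      Complex.cosh_mul_I,
      Complex.sinh_mul_I, ← Complex.ofReal_cosh, ← Complex.ofReal_sinh, ← Complex.ofReal_cos,
      ← Complex.ofReal_sin, ← mul_assoc, ← Complex.ofReal_mul, ← Complex.ofReal_mul,
      Complex.normSq_add_mul_I]
    have h1 := Real.cosh_sq (q.re * t)
    have h2 := Real.sin_sq_add_cos_sq (q.im * t)
    simp only [Complex.norm_ofNat, mul_pow]
    rw [h1]
    linear_combination 4 * Real.sinh (q.re * t) ^ 2 * h2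
  have hsinh : (q.re * t) ^ 2 ≤ Real.sinh (q.re * t) ^ 2 :=
    pow_le_pow_left₀ (by positivity) (Real.self_le_sinh_iff.mpr (by positivity)) 2
  have hcos : 1 - (q.im * t) ^ 2 ≤ Real.cos (q.im * t) ^ 2 := by
    have := Real.sin_sq_le_sq (x := q.im * t)
    nlinarith [Real.sin_sq_add_cos_sq (q.im * t)]
  refine le_of_sq_le_sq ?_ (norm_nonneg _)
  rw [hnorm, div_pow, div_le_iff₀ (by positivity), ← Complex.normSq_eq_norm_sq,
    Complex.normSq_apply]
  set x := q.re
  set v := q.im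
  have c0 := sq_nonneg (Real.cos (v * t))
  have s0 := sq_nonneg (Real.sinh (x * t))
  nlinarith [mul_le_mul_of_nonneg_right hcos (sq_nonneg x),
    mul_le_mul_of_nonneg_right hsinh (sq_nonneg v),
    mul_nonneg c0 (sq_nonneg v), mul_nonneg s0 (sq_nonneg x)]

lemma norm_hyp_one_ge {q : ℂ} (hq : 0 < q.re) {t : ℝ} (ht : 0 < t) :
    2 * q.re * t ≤ ‖hyp 1 q t‖ := by
  have h := norm_sub_norm_le (Complex.exp (q * t)) (1 * Complex.exp (-(q * t)))
  rw [one_mul, Complex.norm_exp, Complex.norm_exp] at h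
  have hs : q.re * t ≤ Real.sinh (q.re * t) := Real.self_le_sinh_iff.mpr (by positivity)
  rw [Real.sinh_eq] at hs
  have e : (q * t : ℂ).re = q.re * t := by simp
  rw [Complex.neg_re, e] at h
  rw [hyp, one_mul]
  linarith

/-- After division by `hyp σ q t`, a power of `t` remains in the numerator; this is what makes the
series of integrals in `hasSum_outer` absolutely convergent. -/
lemma exists_hyp_bound {σ q : ℂ} {n : ℕ} (hn : 1 ≤ n) (hσ : σ = -1 ∨ (σ = 1 ∧ 2 ≤ n))
    (hq : 0 < q.re) : ∃ M : ℕ, 1 ≤ M ∧ ∃ C : ℝ, ∀ t : ℝ, 0 < t →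
      ‖(t : ℂ) ^ n / hyp σ q t‖ ≤ C * t ^ M := by
  have hq0 : q ≠ 0 := by rintro rfl; simp at hq
  have hnq : 0 < ‖q‖ := norm_pos_iff.mpr hq0
  rcases hσ with rfl | ⟨rfl, h2⟩
  · refine ⟨n, hn, (2 * q.re / ‖q‖)⁻¹, fun t ht => ?_⟩
    have := norm_hyp_neg_one_ge hq ht
    rw [norm_div, norm_pow, Complex.norm_real, Real.norm_of_nonneg ht.le, div_eq_inv_mul]
    gcongr
  · obtain ⟨m, rfl⟩ : ∃ m, n = m + 1 := ⟨n - 1, by omega⟩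
    refine ⟨m, by omega, (2 * q.re)⁻¹, fun t ht => ?_⟩
    have := norm_hyp_one_ge hq ht
    rw [norm_div, norm_pow, Complex.norm_real, Real.norm_of_nonneg ht.le]
    calc t ^ (m + 1) / ‖hyp 1 q t‖ ≤ t ^ (m + 1) / (2 * q.re * t) := by gcongr
      _ = _ := by field_simp; ring

/-- `∫₀^∞ t^n / ((e^{pt} - σ e^{-pt}) (e^{qt} - σ e^{-qt})) dt`. -/
noncomputable def hypInt (σ p q : ℂ) (n : ℕ) : ℂ :=
  ∫ t in Set.Ioi (0 : ℝ), (t : ℂ) ^ n / (hyp σ p t * hyp σ q t)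

/-- The two integrals over the half-line combine into one sum over `ℕ × ℤ`, summed row by row: the
second integral supplies the entries with `m ≥ 0`, the first, whose exponents are multiplied by
`-i` and `i`, those with `m < 0`. -/
lemma hasSum_pair {σ w : ℂ} (hr : 0 < w.re) (hi : 0 < w.im) (N : ℕ)
    (hσ : σ = -1 ∨ (σ = 1 ∧ 1 ≤ N)) :
    HasSum (fun l : ℕ => σ ^ l * (σ * ((-1) ^ (N + 1) * (2 * N + 1).factorial /
        (2 * starRingEnd ℂ w) ^ (2 * N + 2) *
        ∑' m : ℤ, σ ^ m / ((2 * l + 1) * (w / starRingEnd ℂ w) / 2 + 1 / 2 + m) ^ (2 * N + 2))))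
      (hypInt σ (-Complex.I * w) (Complex.I * starRingEnd ℂ w) (2 * N + 1) -
        σ * (-1) ^ N * hypInt σ w (starRingEnd ℂ w) (2 * N + 1)) := by
  set v := starRingEnd ℂ w with hv
  have hvr : 0 < v.re := by simpa [hv] using hr
  have hv0 : v ≠ 0 := by rintro h; simp [h] at hvr
  have hσn : ‖σ‖ = 1 := by rcases hσ with rfl | ⟨rfl, _⟩ <;> simp
  have hσ2 : σ * σ = 1 := by rcases hσ with rfl | ⟨rfl, _⟩ <;> simp
  have hσ0 : σ ≠ 0 := by rintro rfl; simp at hσn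
  have hσ' : σ = -1 ∨ (σ = 1 ∧ 2 ≤ 2 * N + 1) := by
    rcases hσ with h | ⟨h, h'⟩
    · exact Or.inl h
    · exact Or.inr ⟨h, by omega⟩
  have hp1 : 0 < (-Complex.I * w).re := by simpa using hi
  have hq1 : 0 < (Complex.I * v).re := by simpa [hv] using hi
  obtain ⟨M1, hM1, C1, hb1⟩ := exists_hyp_bound (n := 2 * N + 1) (by omega) hσ' hq1
  obtain ⟨M2, hM2, C2, hb2⟩ := exists_hyp_bound (n := 2 * N + 1) (by omega) hσ' hvr
  have o1 := hasSum_outer hσn hp1 hM1 hb1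
  have o2 := (hasSum_outer hσn hr hM2 hb2).mul_left (σ * (-1) ^ N)
  have o := o1.sub o2
  convert! o using 1
  ext l
  have i1 := hasSum_inner hσn hp1 hq1 (n := 2 * N + 1) (by omega) l
  have i2 := hasSum_inner hσn hr hvr (n := 2 * N + 1) (by omega) l
  set X1 := ∫ t in Set.Ioi (0 : ℝ), Complex.exp (-((2 * l + 1) * (-Complex.I * w) * t)) *
        ((t : ℂ) ^ (2 * N + 1) / hyp σ (Complex.I * v) t)
  set X2 := ∫ t in Set.Ioi (0 : ℝ), Complex.exp (-((2 * l + 1) * w * t)) *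
        ((t : ℂ) ^ (2 * N + 1) / hyp σ v t)
  set D : ℂ := (2 * v) ^ (2 * N + 2) / (2 * N + 1).factorial with hD
  have hfac : ((2 * N + 1).factorial : ℂ) ≠ 0 := by exact_mod_cast Nat.factorial_ne_zero _
  have h2v : (2 * v) ^ (2 * N + 2) ≠ 0 := pow_ne_zero _ (mul_ne_zero two_ne_zero hv0)
  set f : ℤ → ℂ := fun m =>
    σ ^ m / ((2 * l + 1) * (w / v) / 2 + 1 / 2 + m) ^ (2 * N + 2) with hf
  have hsum : HasSum f (D * X2 + D * ((-1) ^ (N + 1) * σ) * X1) := by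
    refine HasSum.of_nat_of_neg_add_one ?_ ?_
    · convert! i2.mul_left D using 1
      ext m
      have e : (2 * l + 1) * w + (2 * m + 1) * v =
          2 * v * ((2 * l + 1) * (w / v) / 2 + 1 / 2 + m) := by
        field_simp; ring
      simp only [hf]
      rw [e, mul_pow, hD, Int.cast_natCast, zpow_natCast]
      field_simp
    · convert! i1.mul_left (D * ((-1) ^ (N + 1) * σ)) using 1
      ext m
      have e : (2 * l + 1) * (-Complex.I * w) + (2 * m + 1) * (Complex.I * v) =
          -Complex.I * (2 * v * ((2 * l + 1) * (w / v) / 2 + 1 / 2 + ((-(m + 1) : ℤ) : ℂ))) := by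
        push_cast; field_simp; ring
      have hI : (-Complex.I) ^ (2 * N + 2) = (-1) ^ (N + 1) := by
        rw [show 2 * N + 2 = 2 * (N + 1) by ring, pow_mul]; simp
      have hs : σ ^ (-((m : ℤ) + 1)) = σ * σ ^ m := by
        have hinv : σ⁻¹ = σ := inv_eq_of_mul_eq_one_left hσ2
        rw [zpow_neg, ← inv_zpow, hinv]
        norm_cast
        rw [pow_succ']
      have h1 : ((-1 : ℂ) ^ (N + 1)) ≠ 0 := pow_ne_zero _ (by norm_num)
      simp only [hf]
      rw [e, mul_pow, mul_pow (2 * v), hD, hs, hI]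
      field_simp
  rw [hsum.tsum_eq]
  have hm : ((-1 : ℂ) ^ (N + 1)) * (-1) ^ (N + 1) = 1 := by
    rw [← mul_pow]; simp
  have hDinv : (-1) ^ (N + 1) * (2 * N + 1).factorial / (2 * v) ^ (2 * N + 2) * D =
      (-1) ^ (N + 1) := by
    rw [hD]; field_simp
  have : (-1 : ℂ) ^ (N + 1) * (2 * N + 1).factorial / (2 * v) ^ (2 * N + 2) *
      (D * X2 + D * ((-1) ^ (N + 1) * σ) * X1) = (-1) ^ (N + 1) * X2 + σ * X1 := by
    linear_combination (X2 + ((-1) ^ (N + 1) * σ) * X1) * hDinv + σ * X1 * hm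
  rw [this]
  linear_combination σ ^ l * X1 * hσ2

/-! ### The moment integrals as Lambert series -/

/-- Only odd indices survive, and the symmetry `2r+1 ↦ -(2r+1)` turns the sum over positive odd
integers into half of the bilateral series. -/
lemma tsum_odd_eq_Aq {y : ℂ} (hy0 : y ≠ 0) (hy : ‖y‖ < 1) (N : ℕ) :
    ∑' j : ℕ, (1 - (-1) ^ j) * Complex.I ^ j * (j : ℂ) ^ (2 * N + 1) /
      (y ^ (-(j : ℤ)) - (-1) * y ^ (j : ℤ)) = Complex.I * Aq y (2 * N + 1) := by
  have hs : Summable fun r : ℤ => uq y r * ((2 * r + 1 : ℤ) : ℂ) ^ (2 * N + 1) :=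
    (summable_norm_uq hy0 hy (2 * N + 1)).of_norm
  have hS := (hs.comp_injective (i := fun r : ℕ => (r : ℤ)) Nat.cast_injective).hasSum
  set S := ∑' r : ℕ, ((fun r : ℤ => uq y r * ((2 * r + 1 : ℤ) : ℂ) ^ (2 * N + 1)) ∘
    fun r : ℕ => (r : ℤ)) r
  have hA : Aq y (2 * N + 1) = S + S := by
    refine HasSum.tsum_eq (HasSum.of_nat_of_neg_add_one hS ?_)
    convert! hS using 1
    ext r
    have hodd : Odd (2 * N + 1) := ⟨N, rfl⟩
    simp only [Function.comp]
    rw [show (-((r : ℤ) + 1)) = -1 - r by ring, uq_flip,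
      show 2 * (-1 - (r : ℤ)) + 1 = -(2 * r + 1) by ring, Int.cast_neg, hodd.neg_pow]
    ring
  rw [hA]
  refine HasSum.tsum_eq ?_
  have he : HasSum (fun k : ℕ => (1 - (-1) ^ (2 * k)) * Complex.I ^ (2 * k) *
      ((2 * k : ℕ) : ℂ) ^ (2 * N + 1) /
      (y ^ (-((2 * k : ℕ) : ℤ)) - (-1) * y ^ ((2 * k : ℕ) : ℤ))) 0 := by
    convert! hasSum_zero using 1
    ext k
    simp [pow_mul]
  have ho : HasSum (fun k : ℕ => (1 - (-1) ^ (2 * k + 1)) * Complex.I ^ (2 * k + 1) *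
      ((2 * k + 1 : ℕ) : ℂ) ^ (2 * N + 1) /
      (y ^ (-((2 * k + 1 : ℕ) : ℤ)) - (-1) * y ^ ((2 * k + 1 : ℕ) : ℤ)))
      (Complex.I * (S + S)) := by
    convert! hS.mul_left (2 * Complex.I) using 1
    · ext k
      simp only [Function.comp, uq, cq]
      rw [zpow_natCast (-1 : ℂ) k, pow_succ Complex.I, pow_mul Complex.I, Complex.I_sq, Odd.neg_one_pow ⟨k, rfl⟩]
      push_cast
      ring
    · ring
  have h := HasSum.even_add_odd (f := fun j : ℕ => (1 - (-1) ^ j) * Complex.I ^ j *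
    (j : ℂ) ^ (2 * N + 1) / (y ^ (-(j : ℤ)) - (-1) * y ^ (j : ℤ))) he ho
  rwa [zero_add] at h

/-- The nome-like quantity `exp (π i w / (2 w̄))`. -/
noncomputable def nomeq (w : ℂ) : ℂ := Complex.exp (π * Complex.I * (w / starRingEnd ℂ w) / 2)

lemma ratio_im_pos {w : ℂ} (hr : 0 < w.re) (hi : 0 < w.im) : 0 < (w / starRingEnd ℂ w).im := by
  have h : 0 < Complex.normSq w := Complex.normSq_pos.mpr (by rintro rfl; simp at hr)
  rw [Complex.div_im, Complex.normSq_conj, Complex.conj_re, Complex.conj_im]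
  have : w.im * w.re / Complex.normSq w - w.re * -w.im / Complex.normSq w =
    2 * (w.re * w.im) / Complex.normSq w := by ring
  rw [this]
  positivity

lemma nomeq_ne_zero (w : ℂ) : nomeq w ≠ 0 := Complex.exp_ne_zero _

lemma norm_nomeq_lt_one {w : ℂ} (hr : 0 < w.re) (hi : 0 < w.im) : ‖nomeq w‖ < 1 := by
  have h := ratio_im_pos hr hi
  have := norm_cexp_two_pi_I_lt_one (z := w / starRingEnd ℂ w / 4) (by simpa using h)
  rw [nomeq]
  convert! this using 3
  ring

lemma row_im_pos {w : ℂ} (hr : 0 < w.re) (hi : 0 < w.im) (l : ℕ) :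
    0 < ((2 * l + 1) * (w / starRingEnd ℂ w) / 2 + 1 / 2 : ℂ).im := by
  have h := ratio_im_pos hr hi
  have e : ((2 * l + 1) * (w / starRingEnd ℂ w) / 2 + 1 / 2 : ℂ) =
      (((2 * l + 1) / 2 : ℝ) : ℂ) * (w / starRingEnd ℂ w) + ((1 / 2 : ℝ) : ℂ) := by
    push_cast; ring
  rw [e, Complex.add_im, Complex.im_ofReal_mul, Complex.ofReal_im]
  positivity

/-- The combination of integrals with `cosh` denominators as a Lambert series. -/
lemma hypInt_neg_one_eval {w : ℂ} (hr : 0 < w.re) (hi : 0 < w.im) (N : ℕ) :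
    hypInt (-1) (-Complex.I * w) (Complex.I * starRingEnd ℂ w) (2 * N + 1) +
      (-1) ^ N * hypInt (-1) w (starRingEnd ℂ w) (2 * N + 1) =
    -Complex.I * (π / (2 * starRingEnd ℂ w)) ^ (2 * N + 2) * Aq (nomeq w) (2 * N + 1) := by
  have hP := hasSum_pair hr hi N (Or.inl rfl)
  have hL : ∀ l : ℕ, _ := fun l =>
    (hasSum_lipschitz_alt (row_im_pos hr hi l) (n := 2 * N + 1) (by omega)).tsum_eq
  have hE : ∀ l j : ℕ, Complex.exp (π * Complex.I *
      ((2 * l + 1) * (w / starRingEnd ℂ w) / 2 + 1 / 2)) ^ j =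
      Complex.I ^ j * nomeq w ^ ((2 * l + 1) * j) := by
    intro l j
    rw [pow_mul, ← mul_pow, nomeq, ← Complex.exp_nat_mul _ (2 * l + 1)]
    nth_rewrite 2 [← Complex.exp_pi_div_two_mul_I]
    rw [← Complex.exp_add]
    congr 2
    push_cast
    ring
  have hI : (-π * Complex.I) ^ (2 * N + 2) = (-1) ^ (N + 1) * (π : ℂ) ^ (2 * N + 2) := by
    rw [show 2 * N + 2 = 2 * (N + 1) by ring, pow_mul, pow_mul, ← mul_pow]
    congr 1
    rw [mul_pow, Complex.I_sq]; ring
  have hswap := tsum_geom_swap (nomeq_ne_zero w) (norm_nomeq_lt_one hr hi) (σ := -1) (by simp)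
    (n := 2 * N + 1) (by omega) (g := fun j => (1 - (-1) ^ j) * Complex.I ^ j) (by
      intro j
      rw [norm_mul, norm_pow, Complex.norm_I, one_pow, mul_one]
      refine (norm_sub_le _ _).trans ?_
      simp; norm_num)
  rw [tsum_odd_eq_Aq (nomeq_ne_zero w) (norm_nomeq_lt_one hr hi)] at hswap
  have hfac : ((2 * N + 1).factorial : ℂ) ≠ 0 := by exact_mod_cast Nat.factorial_ne_zero _
  have hm : ((-1 : ℂ) ^ (N + 1)) * (-1) ^ (N + 1) = 1 := by
    rw [← mul_pow]; simp
  have hP' := hP.tsum_eq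
  rw [show ∀ A B : ℂ, A - -1 * (-1) ^ N * B = A + (-1) ^ N * B from fun A B => by ring] at hP'
  rw [← hP']
  rw [show -Complex.I * (π / (2 * starRingEnd ℂ w)) ^ (2 * N + 2) * Aq (nomeq w) (2 * N + 1) =
    -(π / (2 * starRingEnd ℂ w)) ^ (2 * N + 2) * (Complex.I * Aq (nomeq w) (2 * N + 1)) by ring,
    ← hswap, ← tsum_mul_left]
  refine tsum_congr fun l => ?_
  rw [hL l, hI]
  simp_rw [hE]
  rw [div_pow]
  have e : ∀ j : ℕ, (1 - (-1) ^ j) * (j : ℂ) ^ (2 * N + 1) *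
      (Complex.I ^ j * nomeq w ^ ((2 * l + 1) * j)) = (1 - (-1) ^ j) * Complex.I ^ j *
      (j : ℂ) ^ (2 * N + 1) * nomeq w ^ ((2 * l + 1) * j) := fun j => by ring
  simp_rw [e]
  set T := ∑' j : ℕ, (1 - (-1) ^ j) * Complex.I ^ j *
      (j : ℂ) ^ (2 * N + 1) * nomeq w ^ ((2 * l + 1) * j)
  set V := (2 * starRingEnd ℂ w) ^ (2 * N + 2)
  have e2 : (-1 : ℂ) ^ (N + 1) * (2 * N + 1).factorial / V *
      ((-1) ^ (N + 1) * (π : ℂ) ^ (2 * N + 2) / (2 * N + 1).factorial * T) =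
      ((-1 : ℂ) ^ (N + 1) * (-1) ^ (N + 1)) * ((π : ℂ) ^ (2 * N + 2) / V * T) *
      (((2 * N + 1).factorial : ℂ) / (2 * N + 1).factorial) := by ring
  rw [e2, hm, div_self hfac]
  ring

/-- The combination of integrals with `sinh` denominators as a Lambert series. -/
lemma hypInt_one_eval {w : ℂ} (hr : 0 < w.re) (hi : 0 < w.im) {N : ℕ} (hN : 1 ≤ N) :
    hypInt 1 (-Complex.I * w) (Complex.I * starRingEnd ℂ w) (2 * N + 1) -
      (-1) ^ N * hypInt 1 w (starRingEnd ℂ w) (2 * N + 1) =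
    (π / starRingEnd ℂ w) ^ (2 * N + 2) *
      ∑' j : ℕ, (-1) ^ j * (j : ℂ) ^ (2 * N + 1) / dq (nomeq w) (2 * j) := by
  have hP := hasSum_pair hr hi N (Or.inr ⟨rfl, hN⟩)
  have hL : ∀ l : ℕ, _ := fun l =>
    (hasSum_lipschitz (row_im_pos hr hi l) (n := 2 * N + 1) (by omega)).tsum_eq
  have hE : ∀ l j : ℕ, Complex.exp (2 * π * Complex.I *
      ((2 * l + 1) * (w / starRingEnd ℂ w) / 2 + 1 / 2)) ^ j =
      (-1) ^ j * (nomeq w ^ 2) ^ ((2 * l + 1) * j) := by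
    intro l j
    rw [pow_mul, ← mul_pow, nomeq, ← Complex.exp_nat_mul _ 2, ← Complex.exp_nat_mul _ (2 * l + 1),
      ← Complex.exp_pi_mul_I, ← Complex.exp_add]
    congr 2
    push_cast
    ring
  have hI : (-2 * π * Complex.I) ^ (2 * N + 2) = (-1) ^ (N + 1) * (2 * π : ℂ) ^ (2 * N + 2) := by
    rw [show 2 * N + 2 = 2 * (N + 1) by ring, pow_mul, pow_mul, ← mul_pow]
    congr 1
    rw [mul_pow, Complex.I_sq]; ring
  have hlt : ‖nomeq w ^ 2‖ < 1 := by
    rw [norm_pow]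
    exact pow_lt_one₀ (norm_nonneg _) (norm_nomeq_lt_one hr hi) two_ne_zero
  have hswap := tsum_geom_swap (pow_ne_zero 2 (nomeq_ne_zero w)) hlt (σ := 1) (by simp)
    (n := 2 * N + 1) (by omega) (g := fun j => (-1) ^ j) (by intro j; simp)
  have hd : ∀ j : ℕ, (nomeq w ^ 2) ^ (-(j : ℤ)) - 1 * (nomeq w ^ 2) ^ (j : ℤ) =
      dq (nomeq w) (2 * j) := by
    intro j
    rw [dq, ← zpow_natCast (nomeq w) 2, ← zpow_mul, ← zpow_mul, one_mul]
    congr 2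
    push_cast; ring
  simp_rw [hd] at hswap
  have hfac : ((2 * N + 1).factorial : ℂ) ≠ 0 := by exact_mod_cast Nat.factorial_ne_zero _
  have hm : ((-1 : ℂ) ^ (N + 1)) * (-1) ^ (N + 1) = 1 := by
    rw [← mul_pow]; simp
  have hP' := hP.tsum_eq
  rw [one_mul ((-1 : ℂ) ^ N)] at hP'
  rw [← hP', ← hswap, ← tsum_mul_left]
  refine tsum_congr fun l => ?_
  simp only [one_pow, one_mul, one_zpow]
  rw [hL l, hI]
  simp_rw [hE]
  have e : ∀ j : ℕ, (j : ℂ) ^ (2 * N + 1) *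
      ((-1) ^ j * (nomeq w ^ 2) ^ ((2 * l + 1) * j)) = (-1) ^ j *
      (j : ℂ) ^ (2 * N + 1) * (nomeq w ^ 2) ^ ((2 * l + 1) * j) := fun j => by ring
  simp_rw [e]
  set T := ∑' j : ℕ, (-1) ^ j *
      (j : ℂ) ^ (2 * N + 1) * (nomeq w ^ 2) ^ ((2 * l + 1) * j)
  have hpi : (π / starRingEnd ℂ w) ^ (2 * N + 2) =
      (2 * π : ℂ) ^ (2 * N + 2) / (2 * starRingEnd ℂ w) ^ (2 * N + 2) := by
    rw [← div_pow, mul_div_mul_left _ _ two_ne_zero]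
  rw [hpi]
  set V := (2 * starRingEnd ℂ w) ^ (2 * N + 2)
  have e2 : (-1 : ℂ) ^ (N + 1) * (2 * N + 1).factorial / V *
      ((-1) ^ (N + 1) * (2 * π : ℂ) ^ (2 * N + 2) / (2 * N + 1).factorial * T) =
      ((-1 : ℂ) ^ (N + 1) * (-1) ^ (N + 1)) * ((2 * π : ℂ) ^ (2 * N + 2) / V * T) *
      (((2 * N + 1).factorial : ℂ) / (2 * N + 1).factorial) := by ring
  rw [e2, hm, div_self hfac]
  ring

/-- The product `(e^{pt} - σ e^{-pt}) (e^{p̄t} - σ e^{-p̄t})` for `p = (b - ai)/2`. -/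
lemma hyp_mul_hyp {σ : ℝ} (hσ : σ * σ = 1) {p q : ℂ} {a b : ℝ} (hp : p = (b - a * Complex.I) / 2)
    (hq : q = (b + a * Complex.I) / 2) (t : ℝ) :
    hyp σ p t * hyp σ q t = ((2 * (Real.cosh (b * t) - σ * Real.cos (a * t)) : ℝ) : ℂ) := by
  have hσ' : (σ : ℂ) * σ = 1 := by exact_mod_cast hσ
  push_cast
  rw [Complex.cosh, Complex.cos, hyp, hyp]
  have e1 : Complex.exp (p * t) * Complex.exp (q * t) = Complex.exp (b * t) := by
    rw [← Complex.exp_add, hp, hq]; congr 1; ring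
  have e2 : Complex.exp (-(p * t)) * Complex.exp (-(q * t)) = Complex.exp (-(b * t)) := by
    rw [← Complex.exp_add, hp, hq]; congr 1; ring
  have e3 : Complex.exp (-(p * t)) * Complex.exp (q * t) = Complex.exp (a * t * Complex.I) := by
    rw [← Complex.exp_add, hp, hq]; congr 1; ring
  have e4 : Complex.exp (p * t) * Complex.exp (-(q * t)) = Complex.exp (-(a * t) * Complex.I) := by
    rw [← Complex.exp_add, hp, hq]; congr 1; ring
  rw [← e1, ← e2, ← e3, ← e4]
  linear_combination Complex.exp (-(p * t)) * Complex.exp (-(q * t)) * hσ'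

/-- The substitution `x = t²`. -/
lemma integral_moment_eq_hypInt {σ : ℝ} (hσ : σ * σ = 1) {p q : ℂ} {a b : ℝ}
    (hp : p = (b - a * Complex.I) / 2) (hq : q = (b + a * Complex.I) / 2) (N : ℕ) :
    ((∫ x in Set.Ioi (0 : ℝ), x ^ N /
      (Real.cosh (b * Real.sqrt x) - σ * Real.cos (a * Real.sqrt x)) : ℝ) : ℂ) =
      4 * hypInt σ p q (2 * N + 1) := by
  rw [← integral_comp_rpow_Ioi_of_pos (p := 2) two_pos, ← integral_complex_ofReal, hypInt,
    ← integral_const_mul]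
  refine setIntegral_congr_fun measurableSet_Ioi fun t ht => ?_
  have ht' : (0 : ℝ) < t := ht
  rw [hyp_mul_hyp hσ hp hq, Real.rpow_two, Real.sqrt_sq ht'.le,
    show (2 : ℝ) - 1 = 1 by norm_num, Real.rpow_one, smul_eq_mul]
  push_cast
  generalize Complex.cosh (b * t) - σ * Complex.cos (a * t) = D
  ring

lemma ellipticK_pos_s10 {k : ℝ} (hk : k ∈ Set.Ioo (0 : ℝ) 1) : 0 < ellipticK k := by
  have hpos : ∀ θ : ℝ, 0 < 1 - k ^ 2 * Real.sin θ ^ 2 := by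
    intro θ
    have h1 := Real.sin_sq_le_one θ
    have h2 : k ^ 2 < 1 := pow_lt_one₀ hk.1.le hk.2 two_ne_zero
    nlinarith [sq_nonneg k, sq_nonneg (Real.sin θ)]
  have hc : Continuous fun θ : ℝ => (1 - k ^ 2 * Real.sin θ ^ 2) ^ (-(1 / 2) : ℝ) :=
    Continuous.rpow_const (by fun_prop) fun θ => Or.inl (hpos θ).ne'
  exact intervalIntegral.intervalIntegral_pos_of_pos (hc.intervalIntegrable _ _)
    (fun θ => Real.rpow_pos_of_pos (hpos θ) _) (by positivity)

/-- `I_N^+` as a Lambert series. -/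
lemma Iplus_eq {k : ℝ} {w : ℂ} (hr : 0 < w.re) (hi : 0 < w.im) (hre : ellipticK k = 2 * w.re)
    (him : ellipticK (Real.sqrt (1 - k ^ 2)) = 2 * w.im) (N : ℕ) :
    (Iplus k N : ℂ) =
      -2 * Complex.I * (π / (2 * starRingEnd ℂ w)) ^ (2 * N + 2) * Aq (nomeq w) (2 * N + 1) := by
  have h1 := integral_moment_eq_hypInt (σ := -1) (by norm_num) (p := -Complex.I * w)
    (q := Complex.I * starRingEnd ℂ w) (a := 2 * w.re) (b := 2 * w.im)
    (by apply Complex.ext <;> simp; ring) (by apply Complex.ext <;> simp) N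
  have h2 := integral_moment_eq_hypInt (σ := -1) (by norm_num) (p := starRingEnd ℂ w)
    (q := w) (a := 2 * w.im) (b := 2 * w.re)
    (by apply Complex.ext <;> simp; ring) (by apply Complex.ext <;> simp) N
  have hcomm : hypInt (-1) (starRingEnd ℂ w) w (2 * N + 1) =
      hypInt (-1) w (starRingEnd ℂ w) (2 * N + 1) := by simp only [hypInt, mul_comm]
  have h := hypInt_neg_one_eval hr hi N
  simp only [neg_mul, one_mul, sub_neg_eq_add, Complex.ofReal_neg, Complex.ofReal_one] at h1 h2 h
  rw [hcomm] at h2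
  rw [Iplus, hre, him]
  simp_rw [add_comm (Real.cos (2 * w.re * _))]
  push_cast
  rw [h1, h2]
  linear_combination 2 * h

/-- `I_n^-` as a Lambert series. -/
lemma Iminus_eq {k : ℝ} {w : ℂ} (hr : 0 < w.re) (hi : 0 < w.im) (hre : ellipticK k = 2 * w.re)
    (him : ellipticK (Real.sqrt (1 - k ^ 2)) = 2 * w.im) (n : ℕ) :
    (Iminus k n : ℂ) = -4 * ((π / starRingEnd ℂ w) ^ (2 * n + 4) *
      ∑' j : ℕ, (-1) ^ j * (j : ℂ) ^ (2 * n + 3) / dq (nomeq w) (2 * j)) := by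
  have h1 := integral_moment_eq_hypInt (σ := 1) (by norm_num) (p := -Complex.I * w)
    (q := Complex.I * starRingEnd ℂ w) (a := 2 * w.re) (b := 2 * w.im)
    (by apply Complex.ext <;> simp; ring) (by apply Complex.ext <;> simp) (n + 1)
  have h2 := integral_moment_eq_hypInt (σ := 1) (by norm_num) (p := starRingEnd ℂ w)
    (q := w) (a := 2 * w.im) (b := 2 * w.re)
    (by apply Complex.ext <;> simp; ring) (by apply Complex.ext <;> simp) (n + 1)
  have hcomm : hypInt 1 (starRingEnd ℂ w) w (2 * (n + 1) + 1) =
      hypInt 1 w (starRingEnd ℂ w) (2 * (n + 1) + 1) := by simp only [hypInt, mul_comm]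
  have h := hypInt_one_eval hr hi (N := n + 1) (by omega)
  simp only [one_mul, Complex.ofReal_one] at h1 h2
  rw [hcomm] at h2
  have hneg : ∀ x : ℝ, x ^ (n + 1) / (Real.cos (2 * w.re * √x) - Real.cosh (2 * w.im * √x)) =
      -(x ^ (n + 1) / (Real.cosh (2 * w.im * √x) - Real.cos (2 * w.re * √x))) := by
    intro x
    rw [← div_neg, neg_sub]
  rw [Iminus, hre, him]
  simp_rw [hneg]
  rw [integral_neg]
  push_cast
  rw [h1, h2]
  linear_combination -4 * h

theorem Iminus_binomial_convolution (k : ℝ) (hk : k ∈ Set.Ioo (0 : ℝ) 1) (n : ℕ) :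
    Iminus k n =
      -4 * ∑ p ∈ Finset.range (n + 1),
        (Nat.choose (2 * n + 1) (2 * p + 1) : ℝ) * Iplus k p * Iplus k (n - p) := by
  have hk' : Real.sqrt (1 - k ^ 2) ∈ Set.Ioo (0 : ℝ) 1 := by
    have h1 : k ^ 2 < 1 := pow_lt_one₀ hk.1.le hk.2 two_ne_zero
    have h0 : 0 < k ^ 2 := pow_pos hk.1 2
    exact ⟨Real.sqrt_pos.mpr (by linarith),
      (Real.sqrt_lt' one_pos).mpr (by linarith)⟩
  obtain ⟨w, hw⟩ : ∃ w : ℂ,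
      w = ⟨ellipticK k / 2, ellipticK (Real.sqrt (1 - k ^ 2)) / 2⟩ := ⟨_, rfl⟩
  have hre : ellipticK k = 2 * w.re := by rw [hw]; ring
  have him : ellipticK (Real.sqrt (1 - k ^ 2)) = 2 * w.im := by rw [hw]; ring
  have hr : 0 < w.re := by linarith [ellipticK_pos_s10 hk]
  have hi : 0 < w.im := by linarith [ellipticK_pos_s10 hk']
  have hconv := Aq_convolution (nomeq_ne_zero w) (norm_nomeq_lt_one hr hi) n
  apply Complex.ofReal_injective
  push_cast
  rw [Iminus_eq hr hi hre him]
  have hterm : ∀ p ∈ Finset.range (n + 1),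
      ((2 * n + 1).choose (2 * p + 1) : ℂ) * (Iplus k p : ℂ) * (Iplus k (n - p) : ℂ) =
      -4 * (π / (2 * starRingEnd ℂ w)) ^ (2 * n + 4) *
        (((2 * n + 1).choose (2 * p + 1) : ℂ) * Aq (nomeq w) (2 * p + 1) *
          Aq (nomeq w) (2 * (n - p) + 1)) := by
    intro p hp
    have hpn : p ≤ n := by simpa [Nat.lt_succ_iff] using hp
    rw [Iplus_eq hr hi hre him, Iplus_eq hr hi hre him,
      show 2 * n + 4 = (2 * p + 2) + (2 * (n - p) + 2) by omega, pow_add]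
    linear_combination 4 * (π / (2 * starRingEnd ℂ w)) ^ (2 * p + 2) *
      (π / (2 * starRingEnd ℂ w)) ^ (2 * (n - p) + 2) *
        (((2 * n + 1).choose (2 * p + 1) : ℂ) * Aq (nomeq w) (2 * p + 1) *
          Aq (nomeq w) (2 * (n - p) + 1)) * Complex.I_sq
  rw [Finset.sum_congr rfl hterm, ← Finset.mul_sum, hconv]
  have hpi : (π / starRingEnd ℂ w) ^ (2 * n + 4) =
      2 ^ (2 * n + 4) * (π / (2 * starRingEnd ℂ w)) ^ (2 * n + 4) := by
    rw [← mul_pow]; congr 1; ring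
  rw [hpi]
  ring
end
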